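/- arXiv:2105.08406 — 3 statements merged into one kernel-verified Lean document; each statement's English description precedes it below -/
import Mathlib

section
/- The 12 points (526,446,232), (0,756,64), (612,660,342), (708,638,193), (546,563,134), (616,622,174), (414,0,370), (548,594,151), (884,1334,722), (452,668,180), (587,659,156), (579,692,0) in ℝ³ are in general position and contain no 7 points in convex position; hence g⁽³⁾(7) ≥ 13. -/
/-!
The points are integral, so both claims reduce to signs of integer orientation determinants
`orient a b c d` (six times the signed volume of the tetrahedron `abcd`).

*General position.* By Cramer's rule, four points with nonzero orientation are affinely independent
(`affineIndependent_of_orient`), and all 495 orientations of the configuration are nonzero.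

*No 7-gon.* If `orient a b c d ≠ 0`, then the barycentric coordinates of `p` with respect to
`a, b, c, d` are the quotients by `orient a b c d` of the orientations obtained by replacing one
vertex by `p`. When all of these are nonnegative, `p` lies in the tetrahedron
(`mem_convexHull_of_orient`), so no set in convex position contains `p, a, b, c, d`.
The list `tetrahedra` collects 82 such quintuples, and each of the 792 seven-element subsets of the
configuration contains at least one of them (`exists_tetrahedron`). The finite verifications are
evaluated by the kernel.
-/

/-- A finite set `S` of points in `ℝ^d` is in *general position* if every
`(d+1)`-element subset of `S` is affinely independent. -/
def InGeneralPosition (d : ℕ) (S : Finset (Fin d → ℝ)) : Prop :=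
  ∀ T ⊆ S, T.card = d + 1 → AffineIndependent ℝ ((↑) : T → (Fin d → ℝ))

/-- A finite set of points is in *convex position* if no point of the set lies in
the convex hull of the other points of the set. -/
def InConvexPosition (d : ℕ) (X : Finset (Fin d → ℝ)) : Prop :=
  ∀ p ∈ X, p ∉ convexHull ℝ (↑(X.erase p) : Set (Fin d → ℝ))

/-- The explicit 12-point configuration in ℝ³ witnessing `g⁽³⁾(7) ≥ 13`. -/
noncomputable def witnessSet : Finset (Fin 3 → ℝ) :=
  { ![526, 446, 232], ![0, 756, 64], ![612, 660, 342], ![708, 638, 193],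
    ![546, 563, 134], ![616, 622, 174], ![414, 0, 370], ![548, 594, 151],
    ![884, 1334, 722], ![452, 668, 180], ![587, 659, 156], ![579, 692, 0] }

/-- The configuration, indexed by `Fin 12` in the order of `witnessSet`, with integer coordinates. -/
def pointZ : Fin 12 → Fin 3 → ℤ :=
  ![![526, 446, 232], ![0, 756, 64], ![612, 660, 342], ![708, 638, 193],
    ![546, 563, 134], ![616, 622, 174], ![414, 0, 370], ![548, 594, 151],
    ![884, 1334, 722], ![452, 668, 180], ![587, 659, 156], ![579, 692, 0]]

/-- The configuration as points of `ℝ³`. -/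
def pointR (i : Fin 12) : Fin 3 → ℝ := fun k => (pointZ i k : ℝ)

/-- The orientation determinant `det (b - a, c - a, d - a)`, expanded along the first row. -/
def orient {R : Type*} [CommRing R] (a b c d : Fin 3 → R) : R :=
  (b 0 - a 0) * ((c 1 - a 1) * (d 2 - a 2) - (c 2 - a 2) * (d 1 - a 1))
  - (b 1 - a 1) * ((c 0 - a 0) * (d 2 - a 2) - (c 2 - a 2) * (d 0 - a 0))
  + (b 2 - a 2) * ((c 0 - a 0) * (d 1 - a 1) - (c 1 - a 1) * (d 0 - a 0))

lemma orient_pointR (i j k l : Fin 12) :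
    orient (pointR i) (pointR j) (pointR k) (pointR l) =
      ((orient (pointZ i) (pointZ j) (pointZ k) (pointZ l) : ℤ) : ℝ) := by
  simp only [orient, pointR]
  push_cast
  ring

lemma pointR_injective : Function.Injective pointR := by
  have hZ : ∀ i j, pointZ i = pointZ j → i = j := by decide +kernel
  intro i j h
  refine hZ i j (funext fun k => ?_)
  have hk := congrFun h k
  simp only [pointR] at hk
  exact_mod_cast hk

lemma witnessSet_eq : witnessSet = Finset.univ.image pointR := by
  have key : ∀ i, pointR i = (![![526, 446, 232], ![0, 756, 64], ![612, 660, 342],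
      ![708, 638, 193], ![546, 563, 134], ![616, 622, 174], ![414, 0, 370], ![548, 594, 151],
      ![884, 1334, 722], ![452, 668, 180], ![587, 659, 156], ![579, 692, 0]] :
      Fin 12 → Fin 3 → ℝ) i := by
    intro i
    funext k
    fin_cases i <;> fin_cases k <;> simp [pointR, pointZ]
  rw [funext key]
  ext x
  simp [witnessSet, Fin.exists_fin_succ, eq_comm]

/-! ### General position -/

/-- Cramer's rule: an affine dependency with weights `w` between four points forces
`w i * orient (p 0) (p 1) (p 2) (p 3) = 0` for every `i`. -/
lemma affineIndependent_of_orient (p : Fin 4 → Fin 3 → ℝ)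
    (h : orient (p 0) (p 1) (p 2) (p 3) ≠ 0) : AffineIndependent ℝ p := by
  rw [affineIndependent_iff]
  intro s w hw hwp i hi
  -- Extending the weights by zero outside `s` turns the sums into sums over `Fin 4`.
  set u : Fin 4 → ℝ := fun i => if i ∈ s then w i else 0 with hu
  have hs : u 0 + u 1 + u 2 + u 3 = 0 := by
    rw [← Fin.sum_univ_four u, ← hw, hu, Finset.sum_ite_mem, Finset.univ_inter]
  have hk : ∀ k, u 0 * p 0 k + u 1 * p 1 k + u 2 * p 2 k + u 3 * p 3 k = 0 := by
    intro k
    rw [← Fin.sum_univ_four (fun i => u i * p i k)]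
    have h' := congrFun hwp k
    simp only [Finset.sum_apply, Pi.smul_apply, smul_eq_mul, Pi.zero_apply] at h'
    rw [← h']
    simp only [hu, ite_mul, zero_mul, Finset.sum_ite_mem, Finset.univ_inter]
  have hui : u i = 0 := by
    -- As an affine function of `x`, the orientation with vertex `i` replaced by `x` vanishes at the
    -- other three vertices, so summing it over the dependency isolates `u i * orient`.
    have hlin : ∀ f : (Fin 3 → ℝ) → ℝ,
        (∀ x, f x = f 0 + (f (Pi.single 0 1) - f 0) * x 0 + (f (Pi.single 1 1) - f 0) * x 1 +
          (f (Pi.single 2 1) - f 0) * x 2) →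
        u 0 * f (p 0) + u 1 * f (p 1) + u 2 * f (p 2) + u 3 * f (p 3) = 0 := by
      intro f hf
      rw [hf (p 0), hf (p 1), hf (p 2), hf (p 3)]
      linear_combination f 0 * hs + (f (Pi.single 0 1) - f 0) * hk 0 +
        (f (Pi.single 1 1) - f 0) * hk 1 + (f (Pi.single 2 1) - f 0) * hk 2
    have e₀ := hlin (fun x => orient x (p 1) (p 2) (p 3)) (by intro x; simp [orient]; ring)
    have e₁ := hlin (fun x => orient (p 0) x (p 2) (p 3)) (by intro x; simp [orient]; ring)
    have e₂ := hlin (fun x => orient (p 0) (p 1) x (p 3)) (by intro x; simp [orient]; ring)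
    have e₃ := hlin (fun x => orient (p 0) (p 1) (p 2) x) (by intro x; simp [orient]; ring)
    refine (mul_eq_zero.1 (?_ : u i * orient (p 0) (p 1) (p 2) (p 3) = 0)).resolve_right h
    simp only [orient] at e₀ e₁ e₂ e₃ ⊢
    fin_cases i
    · simp only [Fin.zero_eta]; linear_combination e₀
    · simp only [Fin.mk_one]; linear_combination e₁
    · simp only [Fin.reduceFinMk]; linear_combination e₂
    · simp only [Fin.reduceFinMk]; linear_combination e₃
  simpa [hu, hi] using hui

lemma orient_pointZ_ne_zero : ∀ i j : Fin 12, i < j → ∀ k, j < k → ∀ l, k < l →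
    orient (pointZ i) (pointZ j) (pointZ k) (pointZ l) ≠ 0 := by
  decide +kernel

lemma inGeneralPosition_witnessSet : InGeneralPosition 3 witnessSet := by
  intro T hT hcard
  rw [witnessSet_eq] at hT
  obtain ⟨I, -, rfl⟩ := Finset.subset_image_iff.1 hT
  rw [Finset.card_image_of_injective _ pointR_injective] at hcard
  have hlt : ∀ a b : Fin 4, a < b → I.orderEmbOfFin hcard a < I.orderEmbOfFin hcard b :=
    fun a b hab => (I.orderEmbOfFin hcard).strictMono hab
  have hind : AffineIndependent ℝ (fun a : Fin 4 => pointR (I.orderEmbOfFin hcard a)) := by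
    apply affineIndependent_of_orient
    rw [orient_pointR]
    exact_mod_cast orient_pointZ_ne_zero _ _ (hlt 0 1 (by decide)) _ (hlt 1 2 (by decide)) _
      (hlt 2 3 (by decide))
  have hrange : Set.range (fun a : Fin 4 => pointR (I.orderEmbOfFin hcard a)) =
      ((I.image pointR : Finset (Fin 3 → ℝ)) : Set (Fin 3 → ℝ)) := by
    rw [Finset.coe_image, ← Finset.range_orderEmbOfFin I hcard, ← Set.range_comp]
    rfl
  have hfin := hind.range
  rw [hrange] at hfin
  exact hfin

/-! ### Absence of 7-gons -/

/-- A point whose barycentric coordinates with respect to a nondegenerate tetrahedron are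
nonnegative lies in the tetrahedron. The coordinates are given by Cramer's rule; multiplying by
`orient a b c d` makes the sign conditions independent of the order of the vertices. -/
lemma mem_convexHull_of_orient {p a b c d : Fin 3 → ℝ} {s : Set (Fin 3 → ℝ)}
    (ha : a ∈ s) (hb : b ∈ s) (hc : c ∈ s) (hd : d ∈ s) (hD : orient a b c d ≠ 0)
    (h₀ : 0 ≤ orient p b c d * orient a b c d) (h₁ : 0 ≤ orient a p c d * orient a b c d)
    (h₂ : 0 ≤ orient a b p d * orient a b c d) (h₃ : 0 ≤ orient a b c p * orient a b c d) :
    p ∈ convexHull ℝ s := by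
  have hdiv : ∀ x : ℝ, 0 ≤ x * orient a b c d → 0 ≤ x / orient a b c d := by
    intro x hx
    rw [← mul_div_mul_right x _ hD]
    exact div_nonneg hx (mul_self_nonneg _)
  have hsum : orient p b c d + orient a p c d + orient a b p d + orient a b c p =
      orient a b c d := by
    simp only [orient]
    ring
  have hp : p = ∑ i : Fin 4, (![orient p b c d / orient a b c d, orient a p c d / orient a b c d,
      orient a b p d / orient a b c d, orient a b c p / orient a b c d] : Fin 4 → ℝ) i •
      (![a, b, c, d] : Fin 4 → Fin 3 → ℝ) i := by
    have hcoord : ∀ k : Fin 3, p k * orient a b c d = orient p b c d * a k +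
        orient a p c d * b k + orient a b p d * c k + orient a b c p * d k := by
      intro k
      fin_cases k <;> simp only [orient, Fin.zero_eta, Fin.mk_one, Fin.reduceFinMk] <;> ring
    funext k
    simp [Fin.sum_univ_four]
    field_simp
    linear_combination hcoord k
  rw [hp]
  refine (convex_convexHull ℝ s).sum_mem ?_ ?_ ?_
  · intro i _
    fin_cases i <;> simp <;> apply hdiv <;> assumption
  · simp [Fin.sum_univ_four]
    field_simp
    linear_combination hsum
  · intro i _
    apply subset_convexHull
    fin_cases i <;> simpa

/-- Quintuples `(p, a, b, c, d)` of indices such that the point `p` lies in the tetrahedron `abcd`.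
They are a selection from all such quintuples, large enough for `exists_tetrahedron`. -/
def tetrahedra : List (Fin 12 × Fin 12 × Fin 12 × Fin 12 × Fin 12) :=
  [(0, 1, 2, 4, 6), (0, 1, 2, 5, 6), (0, 1, 3, 5, 6), (0, 1, 4, 6, 8), (0, 2, 3, 6, 7),
   (0, 2, 4, 6, 9), (0, 2, 6, 7, 10), (0, 3, 6, 7, 8), (0, 3, 6, 9, 10), (0, 5, 6, 7, 8),
   (0, 5, 6, 9, 10), (0, 6, 8, 9, 11), (2, 0, 3, 4, 8), (2, 0, 3, 8, 10), (2, 0, 4, 5, 8),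
   (2, 0, 5, 8, 10), (2, 0, 5, 8, 11), (2, 1, 3, 6, 8), (2, 3, 6, 7, 8), (2, 3, 6, 8, 9),
   (2, 4, 5, 6, 8), (2, 5, 6, 7, 8), (4, 0, 3, 9, 11), (4, 0, 5, 9, 11), (4, 0, 6, 7, 11),
   (4, 1, 2, 6, 11), (4, 1, 6, 10, 11), (4, 2, 6, 9, 11), (5, 0, 1, 3, 7), (5, 0, 3, 4, 10),
   (5, 0, 3, 7, 9), (5, 0, 3, 8, 11), (5, 0, 3, 10, 11), (5, 1, 2, 3, 7), (5, 1, 3, 4, 8),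
   (5, 2, 3, 4, 10), (5, 2, 3, 4, 11), (5, 2, 3, 6, 11), (5, 3, 4, 6, 9), (5, 3, 6, 7, 10),
   (5, 3, 7, 8, 9), (5, 3, 7, 8, 11), (7, 0, 1, 3, 4), (7, 0, 1, 3, 11), (7, 0, 1, 4, 5),
   (7, 0, 1, 10, 11), (7, 0, 2, 9, 11), (7, 1, 2, 4, 10), (7, 1, 4, 5, 9), (7, 1, 4, 6, 10),
   (7, 1, 4, 8, 11), (7, 1, 5, 6, 11), (7, 1, 6, 8, 11), (7, 2, 3, 4, 9), (7, 2, 4, 9, 10),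
   (7, 3, 4, 6, 9), (7, 4, 5, 9, 11), (7, 4, 8, 9, 10), (9, 0, 1, 2, 3), (9, 0, 1, 3, 8),
   (9, 0, 1, 4, 8), (9, 0, 1, 7, 8), (9, 1, 2, 3, 5), (9, 1, 2, 3, 7), (9, 1, 2, 4, 8),
   (9, 1, 2, 5, 10), (9, 1, 2, 6, 10), (9, 1, 2, 7, 11), (9, 1, 3, 6, 8), (9, 1, 5, 6, 8),
   (10, 0, 1, 8, 11), (10, 0, 2, 4, 11), (10, 1, 2, 5, 11), (10, 1, 3, 4, 11), (10, 1, 3, 5, 11),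
   (10, 1, 3, 6, 11), (10, 2, 3, 9, 11), (10, 2, 6, 7, 11), (10, 3, 7, 8, 11), (10, 4, 5, 8, 11),
   (10, 4, 6, 8, 11), (10, 5, 8, 9, 11)]

/-- `forallBits P n m` checks `P` on all numbers whose binary expansion is that of `m` followed by
`n` arbitrary digits. The halving keeps the recursion depth at `n`. -/
def forallBits (P : ℕ → Bool) : ℕ → ℕ → Bool
  | 0, m => P m
  | n + 1, m => forallBits P n (2 * m) && forallBits P n (2 * m + 1)

lemma forallBits_spec (P : ℕ → Bool) (n : ℕ) :
    ∀ m, forallBits P n m = true → ∀ r < 2 ^ n, P (m * 2 ^ n + r) = true := by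
  induction n with
  | zero =>
    intro m h r hr
    obtain rfl : r = 0 := by simpa using hr
    simpa [forallBits] using h
  | succ n ih =>
    intro m h r hr
    rw [forallBits, Bool.and_eq_true] at h
    rw [pow_succ] at hr
    rcases lt_or_ge r (2 ^ n) with hlt | hge
    · have h' := ih _ h.1 r hlt
      rwa [show 2 * m * 2 ^ n + r = m * 2 ^ (n + 1) + r by ring] at h'
    · obtain ⟨q, rfl⟩ := Nat.exists_eq_add_of_le hge
      have h' := ih _ h.2 q (by lia)
      rwa [show (2 * m + 1) * 2 ^ n + q = m * 2 ^ (n + 1) + (2 ^ n + q) by ring] at h'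

/-- Checks that the set of indices below 12 coded by the bits of `m`, if it has seven elements,
contains one of the listed quintuples. -/
def hasTetrahedron (m : ℕ) : Bool :=
  (List.finRange 12).countP (fun i : Fin 12 => m.testBit i) != 7 ||
    tetrahedra.any fun t => m.testBit t.1 && m.testBit t.2.1 && m.testBit t.2.2.1 &&
      m.testBit t.2.2.2.1 && m.testBit t.2.2.2.2

lemma forallBits_hasTetrahedron : forallBits hasTetrahedron 12 0 = true := by
  decide +kernel

lemma exists_tetrahedron (I : Finset (Fin 12)) (hI : I.card = 7) :
    ∃ t ∈ tetrahedra, t.1 ∈ I ∧ t.2.1 ∈ I ∧ t.2.2.1 ∈ I ∧ t.2.2.2.1 ∈ I ∧ t.2.2.2.2 ∈ I := by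
  have hbit : ∀ i : Fin 12, (Nat.ofBits fun i : Fin 12 => decide (i ∈ I)).testBit i =
      decide (i ∈ I) := fun i => by
    rw [Nat.testBit_ofBits_lt _ _ i.isLt]
  have hm := forallBits_spec hasTetrahedron 12 0 forallBits_hasTetrahedron
    (Nat.ofBits fun i : Fin 12 => decide (i ∈ I)) (Nat.ofBits_lt_two_pow _)
  have hcount : (List.finRange 12).countP (fun i => decide (i ∈ I)) = 7 := by
    rw [List.countP_eq_length_filter, ← hI,
      ← List.toFinset_card_of_nodup ((List.nodup_finRange 12).filter _)]
    congr 1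
    ext i
    simp
  simp only [zero_mul, zero_add, hasTetrahedron, hbit, hcount] at hm
  simpa [and_assoc] using hm

lemma tetrahedra_ne : ∀ t ∈ tetrahedra,
    t.2.1 ≠ t.1 ∧ t.2.2.1 ≠ t.1 ∧ t.2.2.2.1 ≠ t.1 ∧ t.2.2.2.2 ≠ t.1 := by
  have h : tetrahedra.all (fun t => decide
      (t.2.1 ≠ t.1 ∧ t.2.2.1 ≠ t.1 ∧ t.2.2.2.1 ≠ t.1 ∧ t.2.2.2.2 ≠ t.1)) = true := by
    decide +kernel
  exact fun t ht => of_decide_eq_true (List.all_eq_true.1 h t ht)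

/-- For a quintuple `t = (p, a, b, c, d)` of indices, the sign conditions placing the point `p` in
the nondegenerate tetrahedron `abcd`. -/
abbrev InTetrahedron (t : Fin 12 × Fin 12 × Fin 12 × Fin 12 × Fin 12) : Prop :=
  let p := pointZ t.1
  let a := pointZ t.2.1
  let b := pointZ t.2.2.1
  let c := pointZ t.2.2.2.1
  let d := pointZ t.2.2.2.2
  orient a b c d ≠ 0 ∧ 0 ≤ orient p b c d * orient a b c d ∧
    0 ≤ orient a p c d * orient a b c d ∧ 0 ≤ orient a b p d * orient a b c d ∧
    0 ≤ orient a b c p * orient a b c d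

lemma tetrahedra_orient : ∀ t ∈ tetrahedra, InTetrahedron t := by
  have h : tetrahedra.all (fun t => decide (InTetrahedron t)) = true := by
    decide +kernel
  exact fun t ht => of_decide_eq_true (List.all_eq_true.1 h t ht)

lemma not_exists_seven_gon : ¬ ∃ X ⊆ witnessSet, X.card = 7 ∧ InConvexPosition 3 X := by
  rintro ⟨X, hX, hcard, hconv⟩
  rw [witnessSet_eq] at hX
  obtain ⟨I, -, rfl⟩ := Finset.subset_image_iff.1 hX
  rw [Finset.card_image_of_injective _ pointR_injective] at hcard
  obtain ⟨⟨p, a, b, c, d⟩, ht, hp, ha, hb, hc, hd⟩ :=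
    exists_tetrahedron I hcard
  obtain ⟨hap, hbp, hcp, hdp⟩ := tetrahedra_ne _ ht
  obtain ⟨hD, h₀, h₁, h₂, h₃⟩ := tetrahedra_orient _ ht
  have hmem : ∀ i ∈ I, i ≠ p → pointR i ∈
      (((I.image pointR).erase (pointR p) : Finset (Fin 3 → ℝ)) : Set (Fin 3 → ℝ)) :=
    fun i hi hip => Finset.mem_coe.2 (Finset.mem_erase.2
      ⟨fun h => hip (pointR_injective h), Finset.mem_image_of_mem _ hi⟩)
  refine hconv (pointR p) (Finset.mem_image_of_mem _ hp)
    (mem_convexHull_of_orient (hmem a ha hap) (hmem b hb hbp) (hmem c hc hcp) (hmem d hd hdp)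
      ?_ ?_ ?_ ?_ ?_) <;> simp only [orient_pointR] <;> exact_mod_cast ‹_›

/-- The 12 listed points in ℝ³ form a set of 12 points in general position which
contains no 7 points in convex position; hence `g⁽³⁾(7) ≥ 13`. -/
theorem g3_7_ge_13 :
    witnessSet.card = 12 ∧ InGeneralPosition 3 witnessSet ∧
      ¬ ∃ X ⊆ witnessSet, X.card = 7 ∧ InConvexPosition 3 X := by
  refine ⟨?_, inGeneralPosition_witnessSet, not_exists_seven_gon⟩
  rw [witnessSet_eq, Finset.card_image_of_injective _ pointR_injective]
  rfl
end

section
/- Every set of 13 points in ℝ⁵ in general position contains 9 points in convex position; that is, g⁽⁵⁾(9) ≤ 13. -/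
/-- A *k-hole* in `S` is a `k`-element subset `X ⊆ S` in convex position such that
no point of `S \ X` lies in the convex hull of `X`. -/
def IsHole (d k : ℕ) (S X : Finset (Fin d → ℝ)) : Prop :=
  X ⊆ S ∧ X.card = k ∧ InConvexPosition d X ∧
    ∀ p ∈ S, p ∉ X → p ∉ convexHull ℝ (↑X : Set (Fin d → ℝ))

/-! ### Grids of triples in a 6-set -/

/-- The bitmasks below `2 ^ 6` with exactly three bits set: the 3-subsets of `Fin 6`. -/
def tripleMasks : List ℕ :=
  [7, 11, 13, 14, 19, 21, 22, 25, 26, 28, 35, 37, 38, 41, 42, 44, 49, 50, 52, 56]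

/-- The conditions of `no_grid` for the entries `u` in cell `c` and `w` in cell `d`: distinct when
the cells share a row or a column, otherwise with at most one common element. A number `m` has at
most one bit set iff `m &&& (m - 1) = 0`. Only `Nat` operations with fast kernel evaluation are
used. -/
def compatible (c : Fin 4 × Fin 3) (u : ℕ) (d : Fin 4 × Fin 3) (w : ℕ) : Bool :=
  bif Nat.beq c.1 d.1 || Nat.beq c.2 d.2 then !(Nat.beq u w)
  else Nat.beq (Nat.land (Nat.land u w) (Nat.sub (Nat.land u w) 1)) 0

/-- Backtracking search: whether the cells in the first list can be given triples compatible with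
each other and with the already filled cells in the second list. -/
def fillable : List (Fin 4 × Fin 3) → List ((Fin 4 × Fin 3) × ℕ) → Bool
  | [], _ => true
  | c :: cs, filled => tripleMasks.any fun u =>
      (filled.all fun e => compatible c u e.1 e.2) && fillable cs ((c, u) :: filled)

/-- Exhaustive search. The nine listed cells together with `(0, 0)` already admit no filling; the
order of the cells keeps the search tree small. -/
theorem fillable_eq_false : fillable
    [(1, 1), (2, 2), (3, 1), (2, 0), (0, 2), (3, 2), (0, 1), (3, 0), (1, 2)]
    [((0, 0), 7)] = false := by
  decide +kernel

/-- An actual grid makes the search succeed on every list of distinct cells. -/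
theorem fillable_of_grid (M : Fin 4 × Fin 3 → ℕ) (hM : ∀ c, M c ∈ tripleMasks)
    (hc : ∀ c d, c ≠ d → compatible c (M c) d (M d) = true)
    (cs done : List (Fin 4 × Fin 3)) (hnd : (cs ++ done).Nodup) :
    fillable cs (done.map fun d => (d, M d)) = true := by
  induction cs generalizing done with
  | nil => rfl
  | cons c cs ih =>
    simp only [fillable, List.any_eq_true, Bool.and_eq_true, List.all_eq_true]
    refine ⟨M c, hM c, ?_, ?_⟩
    · intro e he
      obtain ⟨d, hd, rfl⟩ := List.mem_map.1 he
      apply hc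
      rintro rfl
      simp only [List.cons_append, List.nodup_cons, List.mem_append] at hnd
      exact hnd.1 (Or.inr hd)
    · have := ih (c :: done) (by
        refine (List.Perm.nodup_iff ?_).1 hnd
        simpa using (List.perm_middle (a := c) (l₁ := cs) (l₂ := done)).symm)
      simpa using this

/-- The bitmask of a subset of `Fin 6`. -/
def mask (U : Finset (Fin 6)) : ℕ := ∑ i ∈ U, 2 ^ (i : ℕ)

theorem mask_mem_tripleMasks :
    ∀ U : Finset (Fin 6), U.card = 3 → mask U ∈ tripleMasks := by decide +kernel

theorem mask_ne_mask : ∀ U : Finset (Fin 6), U.card = 3 → ∀ V : Finset (Fin 6), V.card = 3 →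
    U ≠ V → Nat.beq (mask U) (mask V) = false := by
  decide +kernel

theorem mask_land_mask : ∀ U : Finset (Fin 6), U.card = 3 → ∀ V : Finset (Fin 6), V.card = 3 →
    (U ∩ V).card ≤ 1 → Nat.beq (Nat.land (Nat.land (mask U) (mask V))
      (Nat.sub (Nat.land (mask U) (mask V)) 1)) 0 = true := by
  decide +kernel

theorem exists_perm_map_eq (U : Finset (Fin 6)) (hU : U.card = 3) :
    ∃ e : Equiv.Perm (Fin 6), U.map e.toEmbedding = {0, 1, 2} := by
  have h : U.card = ({0, 1, 2} : Finset (Fin 6)).card := by rw [hU]; rfl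
  refine ⟨(Finset.equivOfCardEq h).extendSubtype, ?_⟩
  refine Finset.eq_of_subset_of_card_le ?_ (by rw [Finset.card_map, hU]; rfl)
  intro x hx
  obtain ⟨y, hy, rfl⟩ := Finset.mem_map.1 hx
  exact Equiv.extendSubtype_mem (Finset.equivOfCardEq h) y hy

/-- There is no 4 × 3 array of 3-subsets of a 6-set whose entries are distinct along each row and
each column and such that entries in different rows and different columns meet in at most one
element. Up to a permutation of the 6-set the corner entry is `{0, 1, 2}`. -/
theorem no_grid (U : Fin 4 → Fin 3 → Finset (Fin 6)) (hcard : ∀ a b, (U a b).card = 3)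
    (hcol : ∀ a a' b, a ≠ a' → U a b ≠ U a' b) (hrow : ∀ a b b', b ≠ b' → U a b ≠ U a b')
    (hcross : ∀ a a' b b', a ≠ a' → b ≠ b' → (U a b ∩ U a' b').card ≤ 1) : False := by
  obtain ⟨e, he⟩ := exists_perm_map_eq (U 0 0) (hcard 0 0)
  set U' : Fin 4 × Fin 3 → Finset (Fin 6) := fun c => (U c.1 c.2).map e.toEmbedding with hU'
  have hcard' : ∀ c, (U' c).card = 3 := fun c => by simp [hU', hcard]
  have key := fillable_of_grid (fun c => mask (U' c))
    (fun c => mask_mem_tripleMasks _ (hcard' c)) ?_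
    [(1, 1), (2, 2), (3, 1), (2, 0), (0, 2), (3, 2), (0, 1), (3, 0), (1, 2)] [(0, 0)] (by decide)
  · have h7 : mask (U' (0, 0)) = 7 := by
      simp only [hU', he]; decide
    simp only [List.map_cons, List.map_nil, h7, fillable_eq_false] at key
    exact Bool.false_ne_true key
  · rintro ⟨a, b⟩ ⟨a', b'⟩ hne
    have hb : ∀ {m : ℕ} (i j : Fin m), Nat.beq i j = decide (i = j) := by
      intro m i j
      rw [Bool.eq_iff_iff]
      simp [Nat.beq_eq, Fin.ext_iff]
    have hneU : U a b ≠ U a' b' → Nat.beq (mask (U' (a, b))) (mask (U' (a', b'))) = false :=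
      fun h => mask_ne_mask _ (hcard' _) _ (hcard' _) (by simpa [hU'] using h)
    simp only [compatible, hb]
    by_cases h1 : a = a'
    · subst h1
      have h2 : b ≠ b' := fun h => hne (by rw [h])
      simp [hneU (hrow a b b' h2)]
    · by_cases h2 : b = b'
      · subst h2
        simp [hneU (hcol a a' b h1)]
      · simp only [h1, h2, decide_false, Bool.or_false, cond_false]
        refine mask_land_mask _ (hcard' _) _ (hcard' _) ?_
        rw [← Finset.map_inter, Finset.card_map]
        exact hcross a a' b b' h1 h2

open Finset

/-! ### Six rankings of seven points -/

/-- Each vertex `i` ranks the seven inner points by the numbers `a i x`; `above a x y` is the set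
of vertices that rank `x` above `y`. -/
noncomputable def above (a : Fin 6 → Fin 7 → ℝ) (x y : Fin 7) : Finset (Fin 6) :=
  univ.filter fun i => a i y < a i x

/-- The vertices `i` lying on the same side as the inner point `x` of the hyperplane spanned by
the five inner points other than `x` and `y`. -/
noncomputable def sameSide (l : Fin 7 → ℝ) (a : Fin 6 → Fin 7 → ℝ) (x y : Fin 7) :
    Finset (Fin 6) := if 0 < l x then above a x y else above a y x

/-- The data left from a set without 9-gons whose convex hull is a 5-simplex with vertices `v i`
and with seven inner points `p x`: here `∑ x, l x • p x = 0` is the affine dependency of the inner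
points, and `v i = ∑ x, (l x * a i x) • p x` with coefficients summing to `1`, so `a i` is determined
up to an additive constant. The field `core` says that for vertices `T` and inner points `X`, nine
points in total, some `p w` with `w ∈ X` is a convex combination of the others, with coefficients
`c i` at the `v i`; expanding in the `p x`, the two sides differ by `k` times the dependency `l`. -/
structure Config (l : Fin 7 → ℝ) (a : Fin 6 → Fin 7 → ℝ) : Prop where
  ne : ∀ x, l x ≠ 0
  inj : ∀ i, Function.Injective (a i)
  core : ∀ (T : Finset (Fin 6)) (X : Finset (Fin 7)), T.card + X.card = 9 →
    ∃ w ∈ X, ∃ (c : Fin 6 → ℝ) (k : ℝ), (∀ i ∈ T, 0 ≤ c i) ∧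
      l w * (∑ i ∈ T, c i * a i w - k) = 1 ∧
      (∀ x ∈ X, x ≠ w → l x * (∑ i ∈ T, c i * a i x - k) ≤ 0) ∧
      ∀ x ∉ X, ∑ i ∈ T, c i * a i x = k

/-- If every vertex of `T` ranks `x` above `y`, a nonnegative combination of the rankings in `T`
does so strictly, unless all its coefficients vanish. -/
theorem coeff_eq_zero {a : Fin 6 → Fin 7 → ℝ} {T : Finset (Fin 6)} {c : Fin 6 → ℝ}
    {x y : Fin 7} (hT : T ⊆ above a x y) (hc : ∀ i ∈ T, 0 ≤ c i)
    (h : ∑ i ∈ T, c i * a i x ≤ ∑ i ∈ T, c i * a i y) : ∀ i ∈ T, c i = 0 := by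
  have hpos : ∀ i ∈ T, 0 < a i x - a i y := fun i hi => by
    have := hT hi
    simp only [above, mem_filter, mem_univ, true_and] at this
    linarith
  have hnn : ∀ i ∈ T, 0 ≤ c i * (a i x - a i y) := fun i hi =>
    mul_nonneg (hc i hi) (hpos i hi).le
  have hz : ∑ i ∈ T, c i * (a i x - a i y) = 0 := by
    refine le_antisymm ?_ (sum_nonneg hnn)
    simp only [mul_sub, sum_sub_distrib]
    linarith
  intro i hi
  have := (sum_eq_zero_iff_of_nonneg hnn).1 hz i hi
  exact (mul_eq_zero.1 this).resolve_right (hpos i hi).ne'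

namespace Config

variable {l : Fin 7 → ℝ} {a : Fin 6 → Fin 7 → ℝ}

/-- The dependency of the inner points is only determined up to a scalar, here `-1`. -/
theorem neg (h : Config l a) : Config (-l) (-a) where
  ne x := neg_ne_zero.2 (h.ne x)
  inj i := neg_injective.comp (h.inj i)
  core T X hTX := by
    obtain ⟨w, hw, c, k, hc, h1, h2, h3⟩ := h.core T X hTX
    refine ⟨w, hw, c, -k, hc, ?_, ?_, ?_⟩
    · simp only [Pi.neg_apply, mul_neg, sum_neg_distrib]; linarith
    · intro x hx hxw
      have := h2 x hx hxw
      simp only [Pi.neg_apply, mul_neg, sum_neg_distrib]; linarith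
    · intro x hx
      simp only [Pi.neg_apply, mul_neg, sum_neg_distrib, h3 x hx]

/-- Four vertices ranking `x` above `y` form a 9-gon with the inner points other than `x` and `y`. -/
theorem above_card_le (h : Config l a) {x y : Fin 7} (hxy : x ≠ y) :
    (above a x y).card ≤ 3 := by
  by_contra! hlt
  obtain ⟨T, hT, hT4⟩ := exists_subset_card_eq (show 4 ≤ (above a x y).card from hlt)
  obtain ⟨w, hw, c, k, hc, h1, -, h3⟩ := h.core T ({x, y} : Finset (Fin 7))ᶜ (by
    rw [card_compl, card_pair hxy, hT4]; simp)
  have hx := h3 x (by simp)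
  have hy := h3 y (by simp)
  have h0 := coeff_eq_zero hT hc (hx.trans hy.symm).le
  have hs : ∀ z, ∑ i ∈ T, c i * a i z = 0 := fun z =>
    sum_eq_zero fun i hi => by rw [h0 i hi, zero_mul]
  rw [hs] at hx h1
  rw [← hx] at h1
  simp at h1

theorem above_swap (h : Config l a) {x y : Fin 7} (hxy : x ≠ y) :
    above a y x = (above a x y)ᶜ := by
  ext i
  simp only [above, mem_filter, mem_univ, true_and, mem_compl, not_lt]
  exact ⟨le_of_lt, fun hle => lt_of_le_of_ne hle fun he => hxy (h.inj i he)⟩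

theorem above_card (h : Config l a) {x y : Fin 7} (hxy : x ≠ y) :
    (above a x y).card = 3 := by
  have h1 := h.above_card_le hxy
  have h2 := h.above_card_le hxy.symm
  rw [h.above_swap hxy, card_compl, Fintype.card_fin] at h2
  omega

/-- If the two sets agreed, those three vertices and the six inner points other than `y` would form
a 9-gon. -/
theorem sameSide_ne (h : Config l a) {x x' y : Fin 7} (hx : x ≠ y) (hx' : x' ≠ y)
    (hne : x ≠ x') : sameSide l a x y ≠ sameSide l a x' y := by
  intro heq
  have hcard : (sameSide l a x y).card = 3 := by
    unfold sameSide; split_ifs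
    exacts [h.above_card hx, h.above_card hx.symm]
  obtain ⟨w, hw, c, k, hc, h1, h2, h3⟩ := h.core (sameSide l a x y) ({y} : Finset (Fin 7))ᶜ (by
    rw [card_compl, card_singleton, hcard]; simp)
  have hy := h3 y (by simp)
  -- The set forces all coefficients to vanish through any `z ≠ w` that defines it, and at least
  -- one of the two points differs from `w`.
  have main : ∀ z, z ≠ y → z ≠ w → sameSide l a x y = sameSide l a z y → False := by
    intro z hz hzw hT
    have hz2 := h2 z (by simpa using hz) hzw
    have h0 : ∀ i ∈ sameSide l a x y, c i = 0 := by
      rcases (h.ne z).lt_or_gt with hneg | hpos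
      · refine coeff_eq_zero (a := a) (x := y) (y := z) ?_ hc ?_
        · rw [hT, sameSide, if_neg hneg.not_gt]
        · rw [hy]; nlinarith
      · refine coeff_eq_zero (a := a) (x := z) (y := y) ?_ hc ?_
        · rw [hT, sameSide, if_pos hpos]
        · rw [hy]; nlinarith
    have hs : ∀ z, ∑ i ∈ sameSide l a x y, c i * a i z = 0 := fun z =>
      sum_eq_zero fun i hi => by rw [h0 i hi, zero_mul]
    rw [hs] at hy h1
    rw [← hy] at h1
    simp at h1
  by_cases hxw : x = w
  · exact main x' hx' (fun hh => hne (hxw.trans hh.symm)) heq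
  · exact main x hx hxw rfl

/-- Two vertices in the intersection would form a 9-gon with all seven inner points. -/
theorem above_inter_card_le (h : Config l a) {x x' y y' : Fin 7} (hx : 0 < l x) (hx' : 0 < l x')
    (hy : l y < 0) (hy' : l y' < 0) (hxx : x ≠ x') (hyy : y ≠ y') :
    (above a x y ∩ above a x' y').card ≤ 1 := by
  by_contra! hlt
  obtain ⟨T, hT, hT2⟩ := exists_subset_card_eq (show 2 ≤ _ from hlt)
  obtain ⟨w, hw, c, k, hc, h1, h2, -⟩ := h.core T univ (by simp [hT2])
  -- A pair `z`, `t` avoiding `w` with `T ⊆ above a z t` makes all coefficients vanish, and one of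
  -- the two given pairs avoids `w`.
  have main : ∀ z t, 0 < l z → l t < 0 → z ≠ w → t ≠ w → T ⊆ above a z t → False := by
    intro z t hz ht hzw htw hsub
    have hz2 := h2 z (mem_univ _) hzw
    have ht2 := h2 t (mem_univ _) htw
    have e1 : ∑ i ∈ T, c i * a i z ≤ k := by nlinarith
    have e2 : k ≤ ∑ i ∈ T, c i * a i t := by nlinarith
    have h0 := coeff_eq_zero hsub hc (e1.trans e2)
    have hs : ∀ z, ∑ i ∈ T, c i * a i z = 0 := fun z =>
      sum_eq_zero fun i hi => by rw [h0 i hi, zero_mul]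
    rw [hs] at e1 e2 h1
    have : k = 0 := le_antisymm e2 e1
    rw [this] at h1
    simp at h1
  have s1 := hT.trans inter_subset_left
  have s2 := hT.trans inter_subset_right
  have hd : ∀ {z t}, 0 < l z → l t < 0 → z ≠ t := by
    rintro z t hz ht rfl
    exact lt_asymm hz ht
  by_cases hwx : x = w
  · exact main x' y' hx' hy' (fun hh => hxx (hwx.trans hh.symm))
      (fun hh => hd hx hy' (hwx.trans hh.symm)) s2
  · by_cases hwy : y = w
    · exact main x' y' hx' hy' (fun hh => hd hx' hy (hh.trans hwy.symm))
        (fun hh => hyy (hwy.trans hh.symm)) s2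
    · exact main x y hx hy hwx hwy s1

/-- The sets `above a x y` with `0 < l x` and `l y < 0` would form a grid excluded by `no_grid`. -/
theorem not_four_three (h : Config l a) (h4 : 4 ≤ (univ.filter fun x => 0 < l x).card)
    (h3 : 3 ≤ (univ.filter fun x => l x < 0).card) : False := by
  obtain ⟨A, hA, hA4⟩ := exists_subset_card_eq h4
  obtain ⟨B, hB, hB3⟩ := exists_subset_card_eq h3
  set u : Fin 4 → Fin 7 := ⇑(A.orderEmbOfFin hA4)
  set v : Fin 3 → Fin 7 := ⇑(B.orderEmbOfFin hB3)
  have hu : ∀ i, 0 < l (u i) := fun i =>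
    (mem_filter.1 (hA (A.orderEmbOfFin_mem hA4 i))).2
  have hv : ∀ i, l (v i) < 0 := fun i =>
    (mem_filter.1 (hB (B.orderEmbOfFin_mem hB3 i))).2
  have hui : Function.Injective u := (A.orderEmbOfFin hA4).injective
  have hvi : Function.Injective v := (B.orderEmbOfFin hB3).injective
  have hd : ∀ i j, u i ≠ v j := fun i j hh => lt_asymm (hu i) (hh ▸ hv j)
  refine no_grid (fun i j => above a (u i) (v j)) (fun i j => h.above_card (hd i j)) ?_ ?_ ?_
  · intro i i' j hi
    have := h.sameSide_ne (hd i j) (hd i' j) (hui.ne hi)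
    simpa [sameSide, hu] using this
  · intro i j j' hj
    have := h.sameSide_ne (hd i j).symm (hd i j').symm (hvi.ne hj)
    simpa [sameSide, (hv _).not_gt] using this
  · intro i i' j j' hi hj
    exact h.above_inter_card_le (hu i) (hu i') (hv j) (hv j') (hui.ne hi) (hvi.ne hj)

/-- Each of the six vertices ranks exactly one of `x`, `y`, `z` lowest, and each of the three is
ranked lowest by at most two vertices, as the triples `above a x y`, `above a z y` are distinct. -/
theorem above_inter_card (h : Config l a) {x y z : Fin 7} (hx : 0 < l x) (hy : 0 < l y)
    (hz : 0 < l z) (hxy : x ≠ y) (hzy : z ≠ y) (hxz : x ≠ z) :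
    (above a x y ∩ above a z y).card = 2 := by
  have hle : ∀ {p q r : Fin 7}, 0 < l p → 0 < l r → p ≠ q → r ≠ q → p ≠ r →
      (above a p q ∩ above a r q).card ≤ 2 := by
    intro p q r hp hr hpq hrq hpr
    have hne := h.sameSide_ne hpq hrq hpr
    simp only [sameSide, hp, hr, if_true] at hne
    by_contra! hlt
    have e1 := eq_of_subset_of_card_le (inter_subset_left (s₁ := above a p q) (s₂ := above a r q))
      (by rw [h.above_card hpq]; omega)
    have e2 := eq_of_subset_of_card_le (inter_subset_right (s₁ := above a p q) (s₂ := above a r q))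
      (by rw [h.above_card hrq]; omega)
    exact hne (e1.symm.trans e2)
  have l1 := hle hx hz hxy hzy hxz
  have l2 := hle hy hz hxy.symm hxz.symm hzy.symm
  have l3 := hle hx hy hxz hzy.symm hxy
  have hcov : (univ : Finset (Fin 6)) ⊆ (above a x y ∩ above a z y) ∪
      ((above a y x ∩ above a z x) ∪ (above a x z ∩ above a y z)) := by
    intro i _
    have i1 := (h.inj i).ne hxy
    have i2 := (h.inj i).ne hzy
    have i3 := (h.inj i).ne hxz
    simp only [above, mem_union, mem_inter, mem_filter, mem_univ, true_and]
    rcases i1.lt_or_gt with j1 | j1 <;> rcases i2.lt_or_gt with j2 | j2 <;>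
      rcases i3.lt_or_gt with j3 | j3 <;> simp [*] <;> linarith
  have hc := (card_le_card hcov).trans ((card_union_le _ _).trans
    (Nat.add_le_add_left (card_union_le _ _) _))
  simp only [card_univ, Fintype.card_fin] at hc
  omega

/-- Let `g 0, …, g 4` be five points with positive `l`, in increasing order for vertex `0`, and let
`T k = above a (g k) (g 2)`. These triples pairwise meet in two elements. Vertex `0` lies in `T 3` and
`T 4` but not in `T 0` and `T 1`, which forces both `T 0` and `T 1` to equal `(T 3 ∪ T 4) \ {0}`. -/
theorem not_five (h : Config l a) (h5 : 5 ≤ (univ.filter fun x => 0 < l x).card) : False := by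
  obtain ⟨A, hA, hA5⟩ := exists_subset_card_eq h5
  have hcard : (A.image (a 0)).card = 5 := by rw [card_image_of_injective _ (h.inj 0), hA5]
  have hex : ∀ i, ∃ x, 0 < l x ∧ a 0 x = (A.image (a 0)).orderEmbOfFin hcard i := by
    intro i
    obtain ⟨x, hx, hxe⟩ := mem_image.1 (orderEmbOfFin_mem (A.image (a 0)) hcard i)
    exact ⟨x, (mem_filter.1 (hA hx)).2, hxe⟩
  choose g hg hga using hex
  have hlt : ∀ {i j}, i < j → a 0 (g i) < a 0 (g j) := by
    intro i j hij
    rw [hga, hga]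
    exact ((A.image (a 0)).orderEmbOfFin hcard).strictMono hij
  have hgi : Function.Injective g := by
    intro i j hij
    rcases lt_trichotomy i j with hh | hh | hh
    · exact absurd (hlt hh) (by rw [hij]; exact lt_irrefl _)
    · exact hh
    · exact absurd (hlt hh) (by rw [hij]; exact lt_irrefl _)
  set T : Fin 5 → Finset (Fin 6) := fun k => above a (g k) (g 2) with hT
  have hT3 : ∀ k, k ≠ 2 → (T k).card = 3 := fun k hk => h.above_card (hgi.ne hk)
  have hT2 : ∀ k m, k ≠ 2 → m ≠ 2 → k ≠ m → (T k ∩ T m).card = 2 := fun k m hk hm hkm =>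
    h.above_inter_card (hg _) (hg _) (hg _) (hgi.ne hk) (hgi.ne hm) (hgi.ne hkm)
  have m3 : (0 : Fin 6) ∈ T 3 := by simpa [hT, above] using hlt (show (2 : Fin 5) < 3 by decide)
  have m4 : (0 : Fin 6) ∈ T 4 := by simpa [hT, above] using hlt (show (2 : Fin 5) < 4 by decide)
  have key : ∀ k, k < 2 → T k = (T 3 ∪ T 4).erase 0 := by
    intro k hk
    have h0 : (0 : Fin 6) ∉ T k := by simpa [hT, above] using (hlt hk).le
    have hsub : ∀ m, 2 < m → (0 : Fin 6) ∈ T m → (T m).erase 0 ⊆ T k := by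
      intro m hm h0m
      have e : T k ∩ T m = (T m).erase 0 := by
        refine eq_of_subset_of_card_le ?_ ?_
        · intro i hi
          rw [mem_inter] at hi
          exact mem_erase.2 ⟨fun hh => h0 (hh ▸ hi.1), hi.2⟩
        · rw [card_erase_of_mem h0m, hT3 m hm.ne', hT2 k m hk.ne hm.ne' (hk.trans hm).ne]
      rw [← e]
      exact inter_subset_left
    refine (eq_of_subset_of_card_le ?_ ?_).symm
    · rw [erase_union_distrib]
      exact union_subset (hsub 3 (by decide) m3) (hsub 4 (by decide) m4)
    · have hu := card_union_add_card_inter (T 3) (T 4)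
      rw [hT2 3 4 (by decide) (by decide) (by decide), hT3 3 (by decide), hT3 4 (by decide)] at hu
      rw [hT3 k hk.ne, card_erase_of_mem (mem_union_left _ m3)]
      omega
  have h01 := hT2 0 1 (by decide) (by decide) (by decide)
  rw [key 0 (by decide), ← key 1 (by decide), inter_self, hT3 1 (by decide)] at h01
  omega

/-- The signs of `l` split as `5 + 2` or worse, or as `4 + 3`, up to replacing `l` by `-l`. -/
theorem elim (h : Config l a) : False := by
  have hsum : (univ.filter fun x => 0 < l x).card + (univ.filter fun x => l x < 0).card = 7 := by
    have hneg : (univ.filter fun x => l x < 0) = univ.filter fun x => ¬ 0 < l x :=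
      filter_congr fun x _ => ⟨fun hh => hh.not_gt, fun hh =>
        lt_of_le_of_ne (not_lt.1 hh) (h.ne x)⟩
    rw [hneg, card_filter_add_card_filter_not]
    simp
  have hn := h.neg
  have e1 : (univ.filter fun x => 0 < (-l) x) = univ.filter fun x => l x < 0 := by simp
  have e2 : (univ.filter fun x => (-l) x < 0) = univ.filter fun x => 0 < l x := by simp
  by_cases p5 : 5 ≤ (univ.filter fun x => 0 < l x).card
  · exact h.not_five p5
  by_cases n5 : 5 ≤ (univ.filter fun x => l x < 0).card
  · exact hn.not_five (by rw [e1]; exact n5)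
  by_cases p4 : 4 ≤ (univ.filter fun x => 0 < l x).card
  · exact h.not_four_three p4 (by omega)
  · exact hn.not_four_three (by rw [e1]; omega) (by rw [e2]; omega)

end Config

/-! ### From point sets to rankings -/

section Geometry

variable {S : Finset (Fin 5 → ℝ)}

theorem affineIndependent_six (hgp : InGeneralPosition 5 S) (g : Fin 6 → Fin 5 → ℝ)
    (hg : Function.Injective g) (hS : ∀ i, g i ∈ S) : AffineIndependent ℝ g := by
  have h := hgp (univ.image g) (by intro x hx; obtain ⟨i, -, rfl⟩ := mem_image.1 hx; exact hS i)
    (by rw [card_image_of_injective _ hg]; rfl)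
  exact h.comp_embedding ⟨fun i => ⟨g i, mem_image_of_mem g (mem_univ i)⟩, fun i j hij =>
    hg (Subtype.ext_iff.1 hij)⟩

theorem coeff_zero_six (hgp : InGeneralPosition 5 S) (g : Fin 6 → Fin 5 → ℝ)
    (hg : Function.Injective g) (hS : ∀ i, g i ∈ S) (m : Fin 6 → ℝ) (h0 : ∑ i, m i = 0)
    (h1 : ∑ i, m i • g i = 0) (i : Fin 6) : m i = 0 :=
  (affineIndependent_iff.1 (affineIndependent_six hgp g hg hS)) univ m h0 h1 i (mem_univ i)

theorem exists_coeff_six (hgp : InGeneralPosition 5 S) (g : Fin 6 → Fin 5 → ℝ)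
    (hg : Function.Injective g) (hS : ∀ i, g i ∈ S) (q : Fin 5 → ℝ) :
    ∃ m : Fin 6 → ℝ, ∑ i, m i = 1 ∧ ∑ i, m i • g i = q := by
  have hi := affineIndependent_six hgp g hg hS
  have htop : affineSpan ℝ (Set.range g) = ⊤ :=
    hi.affineSpan_eq_top_iff_card_eq_finrank_add_one.2 (by simp)
  have hq : q ∈ affineSpan ℝ (Set.range g) := by rw [htop]; exact AffineSubspace.mem_top _ _ _
  obtain ⟨m, hm, hmq⟩ := eq_affineCombination_of_mem_affineSpan_of_fintype hq
  refine ⟨m, hm, ?_⟩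
  rw [hmq, Finset.affineCombination_eq_linear_combination _ _ _ hm]

/-- An affine dependency among seven points that misses one of them is trivial. -/
theorem coeff_zero_seven (hgp : InGeneralPosition 5 S) (p : Fin 7 → Fin 5 → ℝ)
    (hp : Function.Injective p) (hS : ∀ i, p i ∈ S) (m : Fin 7 → ℝ) (h0 : ∑ i, m i = 0)
    (h1 : ∑ i, m i • p i = 0) (y : Fin 7) (hy : m y = 0) (x : Fin 7) : m x = 0 := by
  rw [Fin.sum_univ_succAbove _ y, hy, zero_add] at h0
  rw [Fin.sum_univ_succAbove _ y, hy, zero_smul, zero_add] at h1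
  have := coeff_zero_six hgp (fun i => p (y.succAbove i))
    (hp.comp Fin.succAbove_right_injective) (fun i => hS _) (fun i => m (y.succAbove i)) h0 h1
  rcases eq_or_ne x y with rfl | hxy
  · exact hy
  · obtain ⟨i, rfl⟩ := Fin.exists_succAbove_eq hxy
    exact this i

/-- Among nine points of a set without 9-gons, one is a convex combination of the others; it is
not an extreme point of the hull of the whole set. -/
theorem exists_mem_convexHull (hno : ¬ ∃ X ⊆ S, X.card = 9 ∧ InConvexPosition 5 X)
    {ι : Type} [Fintype ι] [DecidableEq ι] (f : ι → Fin 5 → ℝ) (hf : Function.Injective f)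
    (hS : ∀ i, f i ∈ S) (N : Finset ι) (hN : N.card = 9) :
    ∃ w ∈ N, f w ∉ (convexHull ℝ (S : Set (Fin 5 → ℝ))).extremePoints ℝ ∧ ∃ q : ι → ℝ,
      (∀ i ∈ N.erase w, 0 ≤ q i) ∧ ∑ i ∈ N.erase w, q i = 1 ∧
        ∑ i ∈ N.erase w, q i • f i = f w := by
  have h : ¬ InConvexPosition 5 (N.image f) := fun hc => hno ⟨N.image f, by
    intro x hx; obtain ⟨i, -, rfl⟩ := mem_image.1 hx; exact hS i,
    by rw [card_image_of_injective _ hf, hN], hc⟩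
  simp only [InConvexPosition, not_forall, not_not] at h
  obtain ⟨_, hp, hpc⟩ := h
  obtain ⟨w, hw, rfl⟩ := mem_image.1 hp
  refine ⟨w, hw, ?_, ?_⟩
  · rw [(convex_convexHull ℝ _).mem_extremePoints_iff_mem_sdiff_convexHull_sdiff]
    rintro ⟨-, hnot⟩
    refine hnot (convexHull_mono ?_ hpc)
    intro x hx
    rw [mem_coe, mem_erase] at hx
    obtain ⟨i, -, rfl⟩ := mem_image.1 hx.2
    exact ⟨subset_convexHull ℝ _ (hS i), hx.1⟩
  · rw [← image_erase hf, Finset.mem_convexHull'] at hpc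
    obtain ⟨q, hq, hq1, hqs⟩ := hpc
    refine ⟨q ∘ f, fun i hi => hq _ (mem_image_of_mem f hi), ?_, ?_⟩
    · rw [sum_image hf.injOn] at hq1; exact hq1
    · rw [sum_image hf.injOn] at hqs; exact hqs

/-- A labelling of `S` by `m` points `v` of `V` and the `k` remaining points `p`. -/
theorem exists_labelling (hcard : S.card = 13) {V : Finset (Fin 5 → ℝ)} (hV : V ⊆ S) (m k : ℕ)
    (hm : V.card = m) (hmk : m + k = 13) :
    ∃ (v : Fin m → Fin 5 → ℝ) (p : Fin k → Fin 5 → ℝ), Function.Injective (Sum.elim v p) ∧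
      (∀ i, Sum.elim v p i ∈ S) ∧ ∀ i, v i ∈ V := by
  have hk : (S \ V).card = k := by rw [card_sdiff_of_subset hV]; omega
  let ev := V.equivFinOfCardEq hm
  let ep := (S \ V).equivFinOfCardEq hk
  refine ⟨fun i => ev.symm i, fun j => ep.symm j, ?_, ?_, fun i => (ev.symm i).2⟩
  · refine Function.Injective.sumElim (Subtype.val_injective.comp ev.symm.injective)
      (Subtype.val_injective.comp ep.symm.injective) ?_
    intro i j hij
    exact (mem_sdiff.1 (ep.symm j).2).2 (hij ▸ (ev.symm i).2)
  · rintro (i | j)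
    · exact hV (ev.symm i).2
    · exact (mem_sdiff.1 (ep.symm j).2).1

/-- Given seven extreme points, let `p 0, …, p 5` be the other six. Four of the seven lie on the
same side of the hyperplane through `p 1, …, p 5` and form a 9-gon with these five. -/
theorem card_extreme_lt_seven (hcard : S.card = 13) (hgp : InGeneralPosition 5 S)
    (hno : ¬ ∃ X ⊆ S, X.card = 9 ∧ InConvexPosition 5 X) {V : Finset (Fin 5 → ℝ)} (hV : V ⊆ S)
    (hext : ∀ x ∈ V, x ∈ (convexHull ℝ (S : Set (Fin 5 → ℝ))).extremePoints ℝ) :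
    V.card < 7 := by
  by_contra! h7
  obtain ⟨V', hV', hV7⟩ := exists_subset_card_eq h7
  obtain ⟨v, p, hinj, hS, hv⟩ := exists_labelling hcard (hV'.trans hV) 7 6 hV7 rfl
  have hp : Function.Injective p := hinj.comp Sum.inr_injective
  have hpS : ∀ j, p j ∈ S := fun j => hS (Sum.inr j)
  choose b hb1 hb using fun i => exists_coeff_six hgp p hp hpS (v i)
  -- Otherwise `v i, p 1, …, p 5` would be affinely dependent.
  have hb0 : ∀ i, b i 0 ≠ 0 := by
    intro i hi
    have hg : Function.Injective (Function.update p 0 (v i)) := by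
      intro x y hxy
      by_cases hx : x = 0 <;> by_cases hy : y = 0 <;>
        simp only [hx, hy, Function.update_self, Function.update_of_ne, ne_eq,
          not_false_eq_true] at hxy ⊢
      · exact absurd (hinj (a₁ := Sum.inl i) (a₂ := Sum.inr y) hxy) (by simp)
      · exact absurd (hinj (a₁ := Sum.inr x) (a₂ := Sum.inl i) hxy) (by simp)
      · exact hp hxy
    have h1 := hb1 i
    have h2 := hb i
    rw [Fin.sum_univ_succ, hi, zero_add] at h1
    rw [Fin.sum_univ_succ, hi, zero_smul, zero_add] at h2
    have := coeff_zero_six hgp (Function.update p 0 (v i)) hg (by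
      intro x
      by_cases hx : x = 0
      · subst hx; simpa using hS (Sum.inl i)
      · simpa [hx] using hpS x) (Function.update (b i) 0 (-1))
      (by rw [Fin.sum_univ_succ]; simp [Fin.succ_ne_zero, h1])
      (by rw [Fin.sum_univ_succ]; simp [Fin.succ_ne_zero, h2]) 0
    simp at this
  -- `hb0`: no vertex lies on the hyperplane through `p 1, …, p 5`; take four on one side of it.
  obtain ⟨s, T, hT4, hT⟩ : ∃ (s : ℝ) (T : Finset (Fin 7)), T.card = 4 ∧ ∀ i ∈ T, 0 < s * b i 0 := by
    have hsum : (univ.filter fun i => 0 < b i 0).card +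
        (univ.filter fun i => ¬ 0 < b i 0).card = 7 := by
      rw [card_filter_add_card_filter_not]; simp
    by_cases h4 : 4 ≤ (univ.filter fun i => 0 < b i 0).card
    · obtain ⟨T, hT, hT4⟩ := exists_subset_card_eq h4
      exact ⟨1, T, hT4, fun i hi => by simpa using (mem_filter.1 (hT hi)).2⟩
    · obtain ⟨T, hT, hT4⟩ := exists_subset_card_eq
        (show 4 ≤ (univ.filter fun i => ¬ 0 < b i 0).card by omega)
      refine ⟨-1, T, hT4, fun i hi => ?_⟩
      have := lt_of_le_of_ne (not_lt.1 (mem_filter.1 (hT hi)).2) (hb0 i)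
      linarith
  obtain ⟨w, hw, hwe, q, hq, hq1, hqs⟩ := exists_mem_convexHull hno (Sum.elim v p) hinj hS
    (T.disjSum (univ.erase 0)) (by rw [card_disjSum, hT4]; simp)
  rcases w with i | w
  · exact hwe (hext _ (hV' (hv i)))
  have hw0 : w ≠ 0 := by simpa using hw
  have herase : (T.disjSum (univ.erase 0)).erase (Sum.inr w) =
      T.disjSum ((univ.erase 0).erase w) := by
    ext (i | j) <;> simp
  rw [herase] at hq hq1 hqs
  rw [sum_disjSum] at hq1 hqs
  simp only [Sum.elim_inl, Sum.elim_inr] at hqs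
  set X : Finset (Fin 6) := (univ.erase 0).erase w with hX
  -- Expand the expression of `p w` as a convex combination in the affinely independent `p z`.
  -- The coefficient at `p 0` kills the vertices, and then the one at `p w` gives `-1 = 0`.
  have hz := coeff_zero_six hgp p hp hpS
    (fun z => ∑ i ∈ T, q (Sum.inl i) * b i z + (if z ∈ X then q (Sum.inr z) else 0) -
      if z = w then 1 else 0) ?_ ?_
  · have z0 := hz 0
    simp only [hX, mem_erase, ne_eq, not_true_eq_false, mem_univ, false_and, and_false,
      if_false, hw0.symm, add_zero, sub_zero] at z0
    have hc : ∀ i ∈ T, q (Sum.inl i) = 0 := by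
      have hnn : ∀ i ∈ T, 0 ≤ q (Sum.inl i) * (s * b i 0) := fun i hi =>
        mul_nonneg (hq _ (by simpa using hi)) (hT i hi).le
      have hs0 : ∑ i ∈ T, q (Sum.inl i) * (s * b i 0) = 0 := by
        rw [← mul_zero s, ← z0, mul_sum]
        exact sum_congr rfl fun i _ => by ring
      intro i hi
      exact (mul_eq_zero.1 ((sum_eq_zero_iff_of_nonneg hnn).1 hs0 i hi)).resolve_right (hT i hi).ne'
    have zw := hz w
    rw [sum_eq_zero (fun i hi => by rw [hc i hi, zero_mul])] at zw
    simp [hX] at zw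
  · simp only [sum_sub_distrib, sum_add_distrib, sum_ite_mem, univ_inter, sum_ite_eq', mem_univ,
      if_true]
    rw [sum_comm]
    simp only [← mul_sum, hb1, mul_one]
    linarith
  · simp only [sub_smul, add_smul, sum_sub_distrib, sum_add_distrib, ite_smul, zero_smul, one_smul,
      sum_ite_mem, univ_inter, sum_ite_eq', mem_univ, if_true, sum_smul]
    rw [sum_comm]
    simp only [mul_smul, ← smul_sum, hb]
    rw [hqs, sub_self]

theorem six_le_card_extreme (hcard : S.card = 13) (hgp : InGeneralPosition 5 S)
    {V : Finset (Fin 5 → ℝ)}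
    (hV : ∀ x ∈ (convexHull ℝ (S : Set (Fin 5 → ℝ))).extremePoints ℝ, x ∈ V) : 6 ≤ V.card := by
  obtain ⟨T, hT, hT6⟩ := exists_subset_card_eq (show 6 ≤ S.card by omega)
  have hsub : (S : Set (Fin 5 → ℝ)) ⊆ convexHull ℝ (V : Set (Fin 5 → ℝ)) := by
    have hkm := closure_convexHull_extremePoints (S.finite_toSet.isCompact_convexHull ℝ)
      (convex_convexHull ℝ (S : Set (Fin 5 → ℝ)))
    refine (subset_convexHull ℝ _).trans (hkm.symm.subset.trans ?_)
    exact closure_minimal (convexHull_mono fun x hx => hV x hx)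
      (V.finite_toSet.isClosed_convexHull ℝ)
  have hind := hgp T hT hT6
  have := hind.card_le_card_of_subset_affineSpan (t := V)
    (fun x hx => convexHull_subset_affineSpan _ (hsub (hT hx)))
  omega

/-- The rankings come from expanding the vertices in the inner points. `a i x = a i y` would make
`v i` an affine combination of the five inner points other than `x` and `y`. -/
theorem config_of_simplex (hgp : InGeneralPosition 5 S)
    (hno : ¬ ∃ X ⊆ S, X.card = 9 ∧ InConvexPosition 5 X) (v : Fin 6 → Fin 5 → ℝ)
    (p : Fin 7 → Fin 5 → ℝ) (hinj : Function.Injective (Sum.elim v p))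
    (hS : ∀ i, Sum.elim v p i ∈ S)
    (hv : ∀ i, v i ∈ (convexHull ℝ (S : Set (Fin 5 → ℝ))).extremePoints ℝ) :
    ∃ l a, Config l a := by
  have hp : Function.Injective p := hinj.comp Sum.inr_injective
  have hpS : ∀ j, p j ∈ S := fun j => hS (Sum.inr j)
  obtain ⟨l, hls, hl0, hl⟩ : ∃ l : Fin 7 → ℝ, ∑ x, l x • p x = 0 ∧ ∑ x, l x = 0 ∧ ∀ x, l x ≠ 0 := by
    obtain ⟨f, h1, h2, y, hy, hfy⟩ :=
      Module.exists_nontrivial_relation_sum_zero_of_finrank_succ_lt_card (R := ℝ)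
      (t := univ.image p) (by rw [card_image_of_injective _ hp]; simp)
    rw [sum_image hp.injOn] at h1 h2
    obtain ⟨y, -, rfl⟩ := mem_image.1 hy
    refine ⟨fun x => f (p x), h1, h2, fun x hx => hfy ?_⟩
    exact coeff_zero_seven hgp p hp hpS (fun x => f (p x)) h2 h1 x hx y
  have hexa : ∀ i, ∃ a : Fin 7 → ℝ, ∑ x, l x * a x = 1 ∧ ∑ x, (l x * a x) • p x = v i := by
    intro i
    obtain ⟨b, hb1, hb⟩ := exists_coeff_six hgp (fun j => p (Fin.succ j))
      (hp.comp (Fin.succ_injective _)) (fun j => hpS _) (v i)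
    refine ⟨fun x => (Fin.cons 0 b : Fin 7 → ℝ) x / l x, ?_, ?_⟩
    · simp only [mul_div_cancel₀ _ (hl _)]
      rw [Fin.sum_univ_succ]; simpa using hb1
    · simp only [mul_div_cancel₀ _ (hl _)]
      rw [Fin.sum_univ_succ]; simpa using hb
  choose a ha1 ha using hexa
  refine ⟨l, a, hl, ?_, ?_⟩
  · intro i x y hxy
    by_contra hne
    -- Normalise `a i` to vanish at `x`, hence also at `y`, and replace `p x` by `v i`.
    have hg : Function.Injective (Function.update p x (v i)) := by
      intro z t hzt
      by_cases hz : z = x <;> by_cases ht : t = x <;>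
        simp only [hz, ht, Function.update_self, Function.update_of_ne, ne_eq,
          not_false_eq_true] at hzt ⊢
      · exact absurd (hinj (a₁ := Sum.inl i) (a₂ := Sum.inr t) hzt) (by simp)
      · exact absurd (hinj (a₁ := Sum.inr z) (a₂ := Sum.inl i) hzt) (by simp)
      · exact hp hzt
    have hb1 : ∑ z, l z * (a i z - a i x) = 1 := by
      simp only [mul_sub, sum_sub_distrib, ← sum_mul, hl0, ha1]; ring
    have hb : ∑ z, (l z * (a i z - a i x)) • p z = v i := by
      simp only [mul_sub, sub_smul, sum_sub_distrib, ha]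
      simp only [mul_comm (l _) (a i x), mul_smul, ← smul_sum, hls]; simp
    rw [Fin.sum_univ_succAbove _ x, sub_self, mul_zero] at hb1 hb
    rw [zero_add] at hb1
    rw [zero_smul, zero_add] at hb
    have := coeff_zero_seven hgp (Function.update p x (v i)) hg (by
      intro z
      by_cases hz : z = x
      · subst hz; simpa using hS (Sum.inl i)
      · simpa [hz] using hpS z)
      (Function.update (fun z => l z * (a i z - a i x)) x (-1))
      (by rw [Fin.sum_univ_succAbove _ x]; simp [hb1])
      (by rw [Fin.sum_univ_succAbove _ x]; simp [hb]) y
      (by simp [Ne.symm hne, hxy]) x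
    simp at this
  · intro T X hTX
    -- `m` below is the affine dependency of the inner points expressing that `p w` is the given
    -- convex combination; it is a multiple of `l`.
    obtain ⟨w, hw, hwe, q, hq, hq1, hqs⟩ := exists_mem_convexHull hno (Sum.elim v p) hinj hS
      (T.disjSum X) (by rw [card_disjSum, hTX])
    rcases w with i | w
    · exact absurd (hv i) hwe
    have hwX : w ∈ X := by simpa using hw
    have herase : (T.disjSum X).erase (Sum.inr w) = T.disjSum (X.erase w) := by
      ext (i | j) <;> simp
    rw [herase] at hq hq1 hqs
    rw [sum_disjSum] at hq1 hqs
    simp only [Sum.elim_inl, Sum.elim_inr] at hqs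
    set m : Fin 7 → ℝ := fun z => l z * (∑ i ∈ T, q (Sum.inl i) * a i z) +
      (if z ∈ X.erase w then q (Sum.inr z) else 0) - if z = w then 1 else 0 with hm
    have hm0 : ∑ z, m z = 0 := by
      simp only [hm, sum_sub_distrib, sum_add_distrib, sum_ite_mem, univ_inter, sum_ite_eq',
        mem_univ, if_true, mul_sum, mul_left_comm (l _)]
      rw [sum_comm]
      simp only [← mul_sum, ha1, mul_one]
      linarith
    have hms : ∑ z, m z • p z = 0 := by
      simp only [hm, sub_smul, add_smul, sum_sub_distrib, sum_add_distrib, ite_smul, zero_smul,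
        one_smul, sum_ite_mem, univ_inter, sum_ite_eq', mem_univ, if_true, mul_sum, sum_smul,
        mul_left_comm (l _)]
      rw [sum_comm]
      simp only [mul_smul (q _), ← smul_sum, ha]
      rw [hqs, sub_self]
    obtain ⟨k, hk⟩ : ∃ k : ℝ, ∀ z, m z = l z * k := by
      refine ⟨m 0 / l 0, fun z => ?_⟩
      have := coeff_zero_seven hgp p hp hpS (fun z => m z - l z * (m 0 / l 0))
        (by simp only [sum_sub_distrib, ← sum_mul, hm0, hl0]; ring)
        (by simp only [sub_smul, sum_sub_distrib, hms, mul_comm (l _) (m 0 / l 0), mul_smul,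
              ← smul_sum, hls]; simp)
        0 (by simp only [mul_div_cancel₀ _ (hl 0), sub_self]) z
      linarith
    refine ⟨w, hwX, fun i => q (Sum.inl i), k, fun i hi => hq _ (by simpa using hi), ?_, ?_, ?_⟩
    · have := hk w
      simp only [hm, mem_erase, ne_eq, not_true_eq_false, false_and, if_false, if_true] at this
      linarith
    · intro x hx hxw
      have := hk x
      simp only [hm, mem_erase, ne_eq, hxw, not_false_eq_true, hx, and_self, if_true,
        if_false] at this
      have hqx := hq (Sum.inr x) (by simp [hx, hxw])
      linarith
    · intro x hx
      have := hk x
      have hxw : x ≠ w := fun hh => hx (hh ▸ hwX)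
      simp only [hm, mem_erase, hx, and_false, if_false, hxw, add_zero, sub_zero] at this
      exact mul_left_cancel₀ (hl x) this

end Geometry

/-- Every set of 13 points in ℝ⁵ in general position contains a 9-gon:
`g⁽⁵⁾(9) ≤ 13`. -/
theorem g5_9_le_13 (S : Finset (Fin 5 → ℝ)) (hcard : S.card = 13)
    (hgp : InGeneralPosition 5 S) :
    ∃ X ⊆ S, X.card = 9 ∧ InConvexPosition 5 X := by
  classical
  by_contra hno
  let V := S.filter fun x => x ∈ (convexHull ℝ (S : Set (Fin 5 → ℝ))).extremePoints ℝ
  have hVS : V ⊆ S := filter_subset _ _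
  have h7 := card_extreme_lt_seven hcard hgp hno hVS fun x hx => (mem_filter.1 hx).2
  have h6 := six_le_card_extreme hcard hgp (V := V) fun x hx =>
    mem_filter.2 ⟨extremePoints_convexHull_subset hx, hx⟩
  obtain ⟨v, p, hinj, hS, hv⟩ := exists_labelling hcard hVS 6 7 (by omega) rfl
  obtain ⟨l, a, h⟩ := config_of_simplex hgp hno v p hinj hS fun i => (mem_filter.1 (hv i)).2
  exact h.elim
end

section
/- Every set of 13 points in ℝ⁵ in general position contains a 9-hole; that is, h⁽⁵⁾(9) ≤ 13. -/
namespace Holes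

/-! ### The combinatorial condition -/

/-- The pair `h` stands for the affine function `F h.1 - F h.2`, which vanishes on all inner
points except `h.1` and `h.2`; its value at `h.1` has the sign `σ h.1` of the Radon coefficient,
its value at `h.2` the opposite sign. `Removes σ h i` says that it is positive at `i`. -/
def Removes {ι : Type*} (σ : ι → Bool) (h : ι × ι) (i : ι) : Prop :=
  (i = h.1 ∧ σ i = true) ∨ (i = h.2 ∧ σ i = false)

/-- The function attached to `h` is negative at the inner point `i`. -/
def Keeps {ι : Type*} (σ : ι → Bool) (h : ι × ι) (i : ι) : Prop :=
  (i = h.1 ∧ σ i = false) ∨ (i = h.2 ∧ σ i = true)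

/-- The combinatorial data of a deletion producing a hole. The extreme points are `V`, the inner
points `Option V`, where `some v` is the inner point exposed by the deletion of `v`. Delete the
inner points `DI` and the extreme points `DE`, at most four in all, so that two half-spaces `h₁`,
`h₂` contain all remaining points, and every inner point strictly inside both is exposed by a
deleted extreme point. Here `γ v i` is the value of `F i` at `v`. -/
def Good {V : Type*} (σ : Option V → Bool) (γ : V → Option V → ℝ) : Prop :=
  ∃ (h₁ h₂ : Option V × Option V) (DI : Finset (Option V)) (DE : Finset V),
    h₁.1 ≠ h₁.2 ∧ h₂.1 ≠ h₂.2 ∧ DI.card + DE.card ≤ 4 ∧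
    (∀ i, Removes σ h₁ i ∨ Removes σ h₂ i → i ∈ DI) ∧
    (∀ i, Keeps σ h₁ i → Keeps σ h₂ i → ∃ v ∈ DE, i = some v) ∧
    ∀ v ∉ DE, γ v h₁.1 < γ v h₁.2 ∧ γ v h₂.1 < γ v h₂.2

/-- Replacing `F` by `-F` negates the Radon coefficients; this halves the number of sign patterns. -/
theorem Good.of_flip {V : Type*} {σ : Option V → Bool} {γ : V → Option V → ℝ}
    (h : Good (fun i => !σ i) (fun v i => -γ v i)) : Good σ γ := by
  obtain ⟨h₁, h₂, DI, DE, hn₁, hn₂, hc, hR, hK, hE⟩ := h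
  refine ⟨h₁.swap, h₂.swap, DI, DE, hn₁.symm, hn₂.symm, hc, fun i hi => hR i ?_,
    fun i k₁ k₂ => hK i ?_ ?_, fun v hv => ?_⟩
  · simpa [Removes, or_comm] using hi
  · simpa [Keeps, or_comm] using k₁
  · simpa [Keeps, or_comm] using k₂
  · simpa using hE v hv

/-! ### The decision tree -/

/-- The mask of the comparison `γ g j < γ g i`. A set of comparisons is a natural number, one bit
for each triple `(g, i, j)` with `g < 6` and `i, j < 7`. From here on the vertices are `0, …, 5`,
the inner points `0, …, 6` (with `6` standing for `none`), and the inner points with positive sign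
are those below `a`. -/
def bit (g i j : ℕ) : ℕ := Nat.pow 2 (49 * g + 7 * i + j)

/-- The list of inner points `i` with `Removes σ h i`. -/
def removedI (a : ℕ) (h : ℕ × ℕ) : List ℕ :=
  (if h.1 < a then [h.1] else []) ++ (if h.2 < a then [] else [h.2])

/-- The list of inner points `i` with `Keeps σ h i`. -/
def keptI (a : ℕ) (h : ℕ × ℕ) : List ℕ :=
  (if h.1 < a then [] else [h.1]) ++ (if h.2 < a then [h.2] else [])

/-- All sublists of the given length. -/
def choose : ℕ → List ℕ → List (List ℕ)
  | 0, _ => [[]]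
  | _ + 1, [] => []
  | k + 1, x :: l => (choose k l).map (x :: ·) ++ choose (k + 1) l

/-- The mask of the comparisons saying that the vertices in `C` lie strictly inside both
half-spaces. -/
def maskOf (h₁ h₂ : ℕ × ℕ) (C : List ℕ) : ℕ :=
  C.foldr (fun g m => Nat.lor (Nat.lor (bit g h₁.2 h₁.1) (bit g h₂.2 h₂.1)) m) 0

/-- Whether the single half-space `h` already yields a valid deletion under the comparisons that
it involves on `C`; such a mask for a pair of half-spaces is implied by a smaller one. -/
def redundant (a : ℕ) (h : ℕ × ℕ) (C : List ℕ) : Bool :=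
  !(keptI a h).contains 6 &&
    Nat.ble (2 + (removedI a h).length) (C.filter fun g => !(keptI a h).contains g).length

/-- The inner points that must be deleted for `h₁` and `h₂`. -/
def bothRemoved (a : ℕ) (h₁ h₂ : ℕ × ℕ) : List ℕ := removedI a h₁ ∪ removedI a h₂

/-- The inner points lying strictly inside both half-spaces. -/
def bothKept (a : ℕ) (h₁ h₂ : ℕ × ℕ) : List ℕ := (keptI a h₁).filter (keptI a h₂).contains

/-- Sets `C` of vertices such that `Good` holds with these two half-spaces as soon as the vertices
in `C` lie strictly inside both: the other vertices are deleted, `4 - r` in number, where `r` is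
the number of deleted inner points. Only a sublist of all such sets, sufficient for the search, is
taken. -/
def certs (a : ℕ) (h₁ h₂ : ℕ × ℕ) : List (List ℕ) :=
  if (bothKept a h₁ h₂).contains 6 then [] else
  if h₁ = h₂ ∨ (bothRemoved a h₁ h₂).length ≤ 1 then
    (choose (2 + (bothRemoved a h₁ h₂).length)
      ((List.range 6).filter fun g => !(bothKept a h₁ h₂).contains g)).filter
      fun C => h₁ = h₂ ∨ (!redundant a h₁ C && !redundant a h₂ C)
  else []

/-- Ordered pairs of distinct numbers below `n`. -/
def pairs (n : ℕ) : List (ℕ × ℕ) :=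
  (List.range n).flatMap fun x =>
    ((List.range n).filter fun y => !Nat.beq x y).map fun y => (x, y)

/-- The sets of comparisons that imply `Good`. -/
def certMasks (a n : ℕ) : List ℕ :=
  (pairs n).flatMap fun h₁ => ((pairs n).filter fun h₂ =>
    Nat.ble (7 * h₁.1 + h₁.2) (7 * h₂.1 + h₂.2) &&
      !(Nat.beq h₁.1 h₂.2 && Nat.beq h₁.2 h₂.1)).flatMap fun h₂ =>
    (certs a h₁ h₂).map (maskOf h₁ h₂)

/-- The cyclic triples of comparisons at one vertex, which no real function satisfies. -/
def cycleMasks (n : ℕ) : List ℕ :=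
  (List.range 6).flatMap fun g => ((pairs n).filter fun h => Nat.blt h.1 h.2).flatMap fun h =>
    ((List.range n).filter fun k => Nat.blt h.1 k && !Nat.beq k h.2).map fun k =>
      Nat.lor (bit g h.1 h.2) (Nat.lor (bit g h.2 k) (bit g k h.1))

/-- The six binary decisions (one per vertex) comparing the inner points `h.1` and `h.2`, as pairs
of alternative masks; the vertices `h.1` and `h.2` come first. -/
def block (h : ℕ × ℕ) : List (ℕ × ℕ) :=
  ((h.1 :: h.2 :: (List.range 6).filter fun g => !Nat.beq g h.1 && !Nat.beq g h.2).filter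
    fun g => Nat.blt g 6).map fun g => (bit g h.1 h.2, bit g h.2 h.1)

/-- Attach to each decision the forbidden masks from `L` all of whose bits have been decided by
then, `K` being the set of bits decided before. The mask of both alternatives is forbidden too. -/
def bucketBlock : List (ℕ × ℕ) → ℕ → List ℕ → List ((ℕ × ℕ) × List ℕ)
  | [], _, _ => []
  | x :: r, K, L =>
    let K' := Nat.lor K (Nat.lor x.1 x.2)
    (x, Nat.lor x.1 x.2 :: L.filter fun m => Nat.beq (Nat.land K' m) m) ::
      bucketBlock r K' (L.filter fun m => !Nat.beq (Nat.land K' m) m)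

/-- The sequence of all decisions for the pairs of inner points in the given order, each with the
forbidden masks that become testable there. -/
def bucket : List (ℕ × ℕ) → ℕ → List ℕ → List ((ℕ × ℕ) × List ℕ)
  | [], _, _ => []
  | h :: r, K, L =>
    let K' := (block h).foldr (fun x m => Nat.lor x.1 (Nat.lor x.2 m)) K
    bucketBlock (block h) K (L.filter fun m => Nat.beq (Nat.land K' m) m) ++
      bucket r K' (L.filter fun m => !Nat.beq (Nat.land K' m) m)

/-- Whether the set of comparisons `T` contains one of the masks in `B`. Written with recursors so
that the kernel evaluates it quickly. -/
noncomputable def hit (T : ℕ) (B : List ℕ) : Bool :=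
  List.rec false (fun m _ ih => Bool.rec ih true (Nat.beq (Nat.land T m) m)) B

/-- Whether every branch of the decision tree contains a forbidden mask, starting with the
comparisons `T`. -/
noncomputable def search (L : List ((ℕ × ℕ) × List ℕ)) : ℕ → Bool :=
  List.rec (fun _ => false) (fun x _ ih T =>
    Bool.rec false
      (Bool.rec (ih (Nat.lor T x.1.2)) true (hit (Nat.lor T x.1.2) x.2))
      (Bool.rec (ih (Nat.lor T x.1.1)) true (hit (Nat.lor T x.1.1) x.2))) L

/-- The comparisons that may be assumed by symmetry: the inner points `1, …, 5` of equal sign have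
decreasing values at vertex `0`. -/
def start (a : ℕ) : ℕ :=
  (pairs 6).foldr (fun h m =>
    if 0 < h.1 ∧ h.1 < h.2 ∧ (h.1 < a ↔ h.2 < a) then Nat.lor (bit 0 h.1 h.2) m else m) 0

/-- The exhaustive search with `a` positive inner points among `0, …, 5` and using only the inner
points below `n`, deciding the pairs in the order `l`. -/
noncomputable def refute (a n : ℕ) (l : List (ℕ × ℕ)) : Bool :=
  search (bucket l 0 (certMasks a n ++ cycleMasks n)) (start a)

/-- Orders of the decisions for which the search tree is small (some tens of thousands of nodes). -/
def order (a : ℕ) : List (ℕ × ℕ) :=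
  match a with
  | 0 =>
    [(1, 3), (1, 2), (2, 3), (0, 3), (0, 1), (0, 2), (1, 4), (2, 4), (3, 4), (2, 5), (0, 4),
     (0, 5), (3, 5), (1, 5), (4, 5)]
  | 1 =>
    [(1, 3), (1, 2), (2, 3), (1, 4), (2, 4), (3, 4), (1, 5), (3, 5), (4, 5), (0, 1), (0, 4),
     (0, 2), (0, 3), (2, 5), (0, 5)]
  | 2 =>
    [(4, 5), (3, 5), (3, 4), (2, 5), (2, 4), (2, 3), (0, 2), (0, 3), (1, 5), (1, 4), (1, 2),
     (1, 3), (0, 1), (0, 4), (0, 5)]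
  | _ =>
    [(2, 4), (0, 3), (2, 5), (1, 6), (0, 5), (1, 3), (0, 4), (1, 5), (0, 6), (3, 6), (3, 5),
     (5, 6), (3, 4), (4, 6), (2, 6), (1, 2), (1, 4), (2, 3), (0, 2), (4, 5), (0, 1)]

theorem refute_zero : refute 0 6 (order 0) = true := by decide +kernel
theorem refute_one : refute 1 6 (order 1) = true := by decide +kernel
theorem refute_two : refute 2 6 (order 2) = true := by decide +kernel
theorem refute_three : refute 3 7 (order 3) = true := by decide +kernel

/-! ### Soundness of the decision tree -/

theorem mem_choose {k : ℕ} {l C : List ℕ} (h : C ∈ choose k l) :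
    C.Sublist l ∧ C.length = k := by
  induction l generalizing k C with
  | nil => cases k <;> simp_all [choose]
  | cons x l ih =>
    cases k with
    | zero => simp_all [choose]
    | succ k =>
      simp only [choose, List.mem_append, List.mem_map] at h
      rcases h with ⟨C', hC', rfl⟩ | h
      · obtain ⟨h1, h2⟩ := ih hC'
        exact ⟨h1.cons_cons x, by simp [h2]⟩
      · obtain ⟨h1, h2⟩ := ih h
        exact ⟨h1.cons x, h2⟩

theorem mem_pairs {n : ℕ} {h : ℕ × ℕ} : h ∈ pairs n ↔ h.1 < n ∧ h.2 < n ∧ h.1 ≠ h.2 := by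
  obtain ⟨x, y⟩ := h
  have : Nat.beq x y = false ↔ x ≠ y := by rw [← Bool.not_eq_true, Nat.beq_eq]
  simp [pairs, this]

/-- The comparison encoded by the bit position `b = 49 g + 7 i + j`. -/
def Holds (γ : ℕ → ℕ → ℝ) (b : ℕ) : Prop := γ (b / 49) (b % 7) < γ (b / 49) (b / 7 % 7)

/-- All comparisons in the mask `T` hold for `γ`. -/
def TrueMask (γ : ℕ → ℕ → ℝ) (T : ℕ) : Prop := ∀ b, T.testBit b = true → Holds γ b

theorem trueMask_lor {γ : ℕ → ℕ → ℝ} {S T : ℕ} :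
    TrueMask γ (Nat.lor S T) ↔ TrueMask γ S ∧ TrueMask γ T := by
  have : ∀ b, (Nat.lor S T).testBit b = (S.testBit b || T.testBit b) := Nat.testBit_or S T
  simp only [TrueMask, this, Bool.or_eq_true]
  exact ⟨fun h => ⟨fun b hb => h b (.inl hb), fun b hb => h b (.inr hb)⟩,
    fun h b hb => hb.elim (h.1 b) (h.2 b)⟩

theorem trueMask_zero {γ : ℕ → ℕ → ℝ} : TrueMask γ 0 := fun b hb => by simp at hb

theorem trueMask_bit {γ : ℕ → ℕ → ℝ} {g i j : ℕ} (hi : i < 7) (hj : j < 7) :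
    TrueMask γ (bit g i j) ↔ γ g j < γ g i := by
  have h1 : (49 * g + 7 * i + j) / 49 = g := by omega
  have h2 : (49 * g + 7 * i + j) / 7 % 7 = i := by omega
  have h3 : (49 * g + 7 * i + j) % 7 = j := by omega
  have : ∀ b, (bit g i j).testBit b = decide (49 * g + 7 * i + j = b) := fun b =>
    Nat.testBit_two_pow
  simp only [TrueMask, this, decide_eq_true_eq, forall_eq', Holds, h1, h2, h3]

theorem TrueMask.of_land {γ : ℕ → ℕ → ℝ} {T m : ℕ} (hT : TrueMask γ T)
    (h : Nat.land T m = m) : TrueMask γ m := by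
  intro b hb
  rw [← h] at hb
  have : (Nat.land T m).testBit b = (T.testBit b && m.testBit b) := Nat.testBit_and T m b
  rw [this, Bool.and_eq_true] at hb
  exact hT b hb.1

theorem hit_eq_false {γ : ℕ → ℕ → ℝ} {T : ℕ} (hT : TrueMask γ T) {B : List ℕ}
    (hB : ∀ m ∈ B, ¬ TrueMask γ m) : hit T B = false := by
  induction B with
  | nil => rfl
  | cons m B ih =>
    have hm : Nat.beq (Nat.land T m) m = false := by
      rw [Bool.eq_false_iff]
      intro h
      exact hB m (by simp) (hT.of_land (Nat.eq_of_beq_eq_true h))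
    have : hit T (m :: B) = Bool.rec (hit T B) true (Nat.beq (Nat.land T m) m) := rfl
    rw [this, hm]
    exact ih fun m' h' => hB m' (by simp [h'])

/-- The branch of the decision tree that agrees with `γ` contains no forbidden mask. -/
theorem search_eq_false {γ : ℕ → ℕ → ℝ} {L : List ((ℕ × ℕ) × List ℕ)}
    (hL : ∀ x ∈ L, (TrueMask γ x.1.1 ∨ TrueMask γ x.1.2) ∧ ∀ m ∈ x.2, ¬ TrueMask γ m)
    {T : ℕ} (hT : TrueMask γ T) : search L T = false := by
  induction L generalizing T with
  | nil => rfl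
  | cons x L ih =>
    have hs : search (x :: L) T = Bool.rec false
      (Bool.rec (search L (Nat.lor T x.1.2)) true (hit (Nat.lor T x.1.2) x.2))
      (Bool.rec (search L (Nat.lor T x.1.1)) true (hit (Nat.lor T x.1.1) x.2)) := rfl
    obtain ⟨hx, hB⟩ := hL x (by simp)
    have ih' := fun T hT => @ih (fun y hy => hL y (by simp [hy])) T hT
    rcases hx with hx | hx
    · have hT' := trueMask_lor.2 ⟨hT, hx⟩
      rw [hs, hit_eq_false hT' hB, ih' _ hT']
    · have hT' := trueMask_lor.2 ⟨hT, hx⟩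
      rw [hs, hit_eq_false hT' hB, ih' _ hT']
      cases (Bool.rec (search L (Nat.lor T x.1.1)) true (hit (Nat.lor T x.1.1) x.2) : Bool) <;> rfl

theorem bucketBlock_sound {γ : ℕ → ℕ → ℝ} {l : List (ℕ × ℕ)} {K : ℕ} {L : List ℕ}
    (hl : ∀ x ∈ l, (TrueMask γ x.1 ∨ TrueMask γ x.2) ∧ ¬ (TrueMask γ x.1 ∧ TrueMask γ x.2))
    (hL : ∀ m ∈ L, ¬ TrueMask γ m) :
    ∀ x ∈ bucketBlock l K L,
      (TrueMask γ x.1.1 ∨ TrueMask γ x.1.2) ∧ ∀ m ∈ x.2, ¬ TrueMask γ m := by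
  induction l generalizing K L with
  | nil => simp [bucketBlock]
  | cons y l ih =>
    intro x hx
    simp only [bucketBlock, List.mem_cons] at hx
    rcases hx with rfl | hx
    · refine ⟨(hl y (by simp)).1, ?_⟩
      intro m hm
      rcases List.mem_cons.1 hm with rfl | hm
      · rw [trueMask_lor]
        exact (hl y (by simp)).2
      · exact hL m (List.mem_filter.1 hm).1
    · exact ih (fun z hz => hl z (by simp [hz]))
        (fun m hm => hL m (List.mem_filter.1 hm).1) x hx

theorem bucket_sound {γ : ℕ → ℕ → ℝ} {l : List (ℕ × ℕ)} {K : ℕ} {L : List ℕ}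
    (hl : ∀ h ∈ l, ∀ x ∈ block h,
      (TrueMask γ x.1 ∨ TrueMask γ x.2) ∧ ¬ (TrueMask γ x.1 ∧ TrueMask γ x.2))
    (hL : ∀ m ∈ L, ¬ TrueMask γ m) :
    ∀ x ∈ bucket l K L,
      (TrueMask γ x.1.1 ∨ TrueMask γ x.1.2) ∧ ∀ m ∈ x.2, ¬ TrueMask γ m := by
  induction l generalizing K L with
  | nil => simp [bucket]
  | cons y l ih =>
    intro x hx
    simp only [bucket, List.mem_append] at hx
    rcases hx with hx | hx
    · exact bucketBlock_sound (hl y (by simp)) (fun m hm => hL m (List.mem_filter.1 hm).1) x hx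
    · exact ih (fun z hz => hl z (by simp [hz]))
        (fun m hm => hL m (List.mem_filter.1 hm).1) x hx

theorem trueMask_maskOf {γ : ℕ → ℕ → ℝ} {h₁ h₂ : ℕ × ℕ} {C : List ℕ}
    (hh₁ : h₁.1 < 7 ∧ h₁.2 < 7) (hh₂ : h₂.1 < 7 ∧ h₂.2 < 7) :
    TrueMask γ (maskOf h₁ h₂ C) ↔ ∀ g ∈ C, γ g h₁.1 < γ g h₁.2 ∧ γ g h₂.1 < γ g h₂.2 := by
  induction C with
  | nil => simp [maskOf, trueMask_zero]
  | cons g C ih =>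
    have : maskOf h₁ h₂ (g :: C) =
      Nat.lor (Nat.lor (bit g h₁.2 h₁.1) (bit g h₂.2 h₂.1)) (maskOf h₁ h₂ C) := rfl
    rw [this, trueMask_lor, trueMask_lor, ih, trueMask_bit hh₁.2 hh₁.1, trueMask_bit hh₂.2 hh₂.1]
    simp

theorem mem_certs {a : ℕ} {h₁ h₂ : ℕ × ℕ} {C : List ℕ} (h : C ∈ certs a h₁ h₂) :
    6 ∉ bothKept a h₁ h₂ ∧ C ∈ choose (2 + (bothRemoved a h₁ h₂).length)
      ((List.range 6).filter fun g => !(bothKept a h₁ h₂).contains g) := by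
  unfold certs at h
  split_ifs at h with h6 h1
  · simp at h
  · exact ⟨by simpa using h6, (List.mem_filter.1 h).1⟩
  · simp at h

theorem trueMask_start {γ : ℕ → ℕ → ℝ} {a : ℕ}
    (hs : ∀ x y, 0 < x → x < y → y < 6 → (x < a ↔ y < a) → γ 0 y < γ 0 x) :
    TrueMask γ (start a) := by
  have key : ∀ l : List (ℕ × ℕ), (∀ h ∈ l, h.1 < 6 ∧ h.2 < 6) →
      TrueMask γ (l.foldr (fun h m =>
        if 0 < h.1 ∧ h.1 < h.2 ∧ (h.1 < a ↔ h.2 < a) then Nat.lor (bit 0 h.1 h.2) m else m) 0) := by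
    intro l hl
    induction l with
    | nil => exact trueMask_zero
    | cons h l ih =>
      have ih' := ih fun z hz => hl z (by simp [hz])
      have hh := hl h (by simp)
      rw [List.foldr_cons]
      split_ifs with hc
      · rw [trueMask_lor, trueMask_bit (by omega) (by omega)]
        exact ⟨hs _ _ hc.1 hc.2.1 hh.2 hc.2.2, ih'⟩
      · exact ih'
  exact key _ fun h hh => by rw [mem_pairs] at hh; exact ⟨hh.1, hh.2.1⟩

/-- If `γ` satisfies the normalization and none of the certificates applies, the search does not
succeed. -/
theorem refute_eq_false {γ : ℕ → ℕ → ℝ} {a n : ℕ} {l : List (ℕ × ℕ)} (hn : n ≤ 7)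
    (hl : ∀ h ∈ l, h ∈ pairs n)
    (hγ : ∀ g < 6, ∀ i < n, ∀ j < n, γ g i = γ g j → i = j)
    (hs : ∀ x y, 0 < x → x < y → y < 6 → (x < a ↔ y < a) → γ 0 y < γ 0 x)
    (hc : ∀ h₁ ∈ pairs n, ∀ h₂ ∈ pairs n, 6 ∉ bothKept a h₁ h₂ →
      ∀ C ∈ choose (2 + (bothRemoved a h₁ h₂).length)
        ((List.range 6).filter fun g => !(bothKept a h₁ h₂).contains g),
      ¬ ∀ g ∈ C, γ g h₁.1 < γ g h₁.2 ∧ γ g h₂.1 < γ g h₂.2) :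
    refute a n l = false := by
  refine search_eq_false (bucket_sound ?_ ?_) (trueMask_start hs)
  · intro h hh x hx
    have hp := mem_pairs.1 (hl h hh)
    simp only [block, List.mem_map, List.mem_filter] at hx
    obtain ⟨g, ⟨-, hg⟩, rfl⟩ := hx
    have hg6 : g < 6 := by simpa using hg
    simp only
    rw [trueMask_bit (by omega) (by omega), trueMask_bit (by omega) (by omega)]
    refine ⟨?_, fun h => lt_asymm h.1 h.2⟩
    exact (lt_or_gt_of_ne fun he => hp.2.2 (hγ g hg6 _ hp.1 _ hp.2.1 he.symm))
  · intro m hm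
    rcases List.mem_append.1 hm with hm | hm
    · simp only [certMasks, List.mem_flatMap, List.mem_filter, List.mem_map] at hm
      obtain ⟨h₁, hh₁, h₂, ⟨hh₂, -⟩, C, hC, rfl⟩ := hm
      have p₁ := mem_pairs.1 hh₁
      have p₂ := mem_pairs.1 hh₂
      rw [trueMask_maskOf ⟨by omega, by omega⟩ ⟨by omega, by omega⟩]
      exact hc h₁ hh₁ h₂ hh₂ (mem_certs hC).1 C (mem_certs hC).2
    · simp only [cycleMasks, List.mem_flatMap, List.mem_filter, List.mem_map] at hm
      obtain ⟨g, -, h, ⟨hh, -⟩, k, ⟨hk, -⟩, rfl⟩ := hm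
      have p := mem_pairs.1 hh
      have hk' := List.mem_range.1 hk
      rw [trueMask_lor, trueMask_lor, trueMask_bit (by omega) (by omega),
        trueMask_bit (by omega) (by omega), trueMask_bit (by omega) (by omega)]
      rintro ⟨h1, h2, h3⟩
      linarith

/-! ### The combinatorial condition always holds -/

theorem mem_removedI {a : ℕ} {h : ℕ × ℕ} {i : ℕ} :
    i ∈ removedI a h ↔ Removes (fun j => decide (j < a)) h i := by
  unfold removedI Removes
  split_ifs <;> simp <;> grind

theorem mem_keptI {a : ℕ} {h : ℕ × ℕ} {i : ℕ} :
    i ∈ keptI a h ↔ Keeps (fun j => decide (j < a)) h i := by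
  unfold keptI Keeps
  split_ifs <;> simp <;> grind

/-- A configuration that is not `Good`, labelled so that the positive vertices come first and the
values at vertex `0` are sorted, survives the search. -/
theorem refute_false_of_not_good {V : Type*} [Fintype V] (e : Fin 6 ≃ V)
    {σ : Option V → Bool} {γ : V → Option V → ℝ} (hγ : ∀ v, Function.Injective (γ v))
    (hg : ¬ Good σ γ) {a n : ℕ} (hn : n ≤ 7)
    (hσ : ∀ i : Fin 6, σ (some (e i)) = decide ((i : ℕ) < a))
    (hσ6 : 6 < n → σ none = decide (6 < a))
    (hs : ∀ x y : Fin 6, 0 < x → x < y → ((x : ℕ) < a ↔ (y : ℕ) < a) →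
      γ (e 0) (some (e y)) < γ (e 0) (some (e x)))
    {l : List (ℕ × ℕ)} (hl : ∀ h ∈ l, h ∈ pairs n) :
    refute a n l = false := by
  classical
  let lab : ℕ → Option V := fun i => if h : i < 6 then some (e ⟨i, h⟩) else none
  let vert : ℕ → V := fun g => if h : g < 6 then e ⟨g, h⟩ else e 0
  have lab_some : ∀ i (h : i < 6), lab i = some (e ⟨i, h⟩) := fun i h => dif_pos h
  have vert_eq : ∀ g (h : g < 6), vert g = e ⟨g, h⟩ := fun i h => dif_pos h
  have lab_inj : ∀ i < 7, ∀ j < 7, lab i = lab j → i = j := by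
    intro i hi j hj h
    by_cases h1 : i < 6 <;> by_cases h2 : j < 6
    · simpa [lab, h1, h2] using h
    · simp [lab, h1, h2] at h
    · simp [lab, h1, h2] at h
    · omega
  have hσ' : ∀ i < n, σ (lab i) = decide (i < a) := by
    intro i hi
    by_cases h1 : i < 6
    · rw [lab_some i h1, hσ]
    · obtain rfl : i = 6 := by omega
      simpa [lab] using hσ6 hi
  refine refute_eq_false (γ := fun g i => γ (vert g) (lab i)) hn hl ?_ ?_ ?_
  · intro g _ i hi j hj h
    exact lab_inj i (by omega) j (by omega) (hγ _ h)
  · intro x y h0 hxy hy hxa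
    have := hs ⟨x, by omega⟩ ⟨y, hy⟩ (by simpa [Fin.lt_def] using h0) (by simpa using hxy) hxa
    simp only [lab_some x (by omega), lab_some y hy, vert_eq 0 (by norm_num)]
    exact this
  · intro h₁ hh₁ h₂ hh₂ h6 C hC hall
    rw [mem_pairs] at hh₁ hh₂
    obtain ⟨hsub, hlen⟩ := mem_choose hC
    have hC6 : ∀ g ∈ C, g < 6 ∧ g ∉ bothKept a h₁ h₂ := by
      intro g hg
      simpa using hsub.subset hg
    have hnd : C.Nodup := hsub.nodup (List.nodup_range.filter _)
    -- translate removed and kept points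
    have hRem : ∀ h : ℕ × ℕ, h.1 < n → h.2 < n → ∀ i, Removes σ (lab h.1, lab h.2) i →
        ∃ j ∈ removedI a h, lab j = i := by
      rintro h p1 p2 i (⟨rfl, hi⟩ | ⟨rfl, hi⟩)
      · exact ⟨h.1, mem_removedI.2 (.inl ⟨rfl, (hσ' _ p1).symm.trans hi⟩), rfl⟩
      · exact ⟨h.2, mem_removedI.2 (.inr ⟨rfl, (hσ' _ p2).symm.trans hi⟩), rfl⟩
    have hKeep : ∀ h : ℕ × ℕ, h.1 < n → h.2 < n → ∀ i, Keeps σ (lab h.1, lab h.2) i →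
        ∃ j ∈ keptI a h, j < n ∧ lab j = i := by
      rintro h p1 p2 i (⟨rfl, hi⟩ | ⟨rfl, hi⟩)
      · exact ⟨h.1, mem_keptI.2 (.inl ⟨rfl, (hσ' _ p1).symm.trans hi⟩), p1, rfl⟩
      · exact ⟨h.2, mem_keptI.2 (.inr ⟨rfl, (hσ' _ p2).symm.trans hi⟩), p2, rfl⟩
    refine hg ⟨(lab h₁.1, lab h₁.2), (lab h₂.1, lab h₂.2),
      (bothRemoved a h₁ h₂).toFinset.image lab, (C.toFinset.image vert)ᶜ, ?_, ?_, ?_, ?_, ?_, ?_⟩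
    · exact fun h => hh₁.2.2 (lab_inj _ (by omega) _ (by omega) h)
    · exact fun h => hh₂.2.2 (lab_inj _ (by omega) _ (by omega) h)
    · have c1 : ((bothRemoved a h₁ h₂).toFinset.image lab).card ≤ (bothRemoved a h₁ h₂).length :=
        Finset.card_image_le.trans (List.toFinset_card_le _)
      have c2 : (C.toFinset.image vert).card = C.length := by
        rw [Finset.card_image_of_injOn, List.toFinset_card_of_nodup hnd]
        intro x hx y hy hxy
        have hx6 := (hC6 x (by simpa using hx)).1
        have hy6 := (hC6 y (by simpa using hy)).1
        simpa [vert_eq x hx6, vert_eq y hy6] using hxy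
      have c3 : Fintype.card V = 6 := by rw [← Fintype.card_congr e, Fintype.card_fin]
      have c4 := Finset.card_le_univ (C.toFinset.image vert)
      rw [Finset.card_compl, c2, c3]
      omega
    · rintro i (hi | hi)
      · obtain ⟨j, hj, rfl⟩ := hRem h₁ hh₁.1 hh₁.2.1 i hi
        exact Finset.mem_image_of_mem _ (by simp [bothRemoved, hj])
      · obtain ⟨j, hj, rfl⟩ := hRem h₂ hh₂.1 hh₂.2.1 i hi
        exact Finset.mem_image_of_mem _ (by simp [bothRemoved, hj])
    · intro i k1 k2
      obtain ⟨j, hj, hjn, rfl⟩ := hKeep h₁ hh₁.1 hh₁.2.1 i k1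
      obtain ⟨j', hj', hjn', h'⟩ := hKeep h₂ hh₂.1 hh₂.2.1 _ k2
      obtain rfl := lab_inj _ (by omega) _ (by omega) h'
      have hU : j' ∈ bothKept a h₁ h₂ := by simp [bothKept, hj, hj']
      have hj6 : j' < 6 := by
        rcases Nat.lt_or_ge j' 6 with h | h
        · exact h
        · obtain rfl : j' = 6 := by omega
          exact absurd hU h6
      refine ⟨e ⟨j', hj6⟩, ?_, lab_some _ hj6⟩
      simp only [Finset.mem_compl, Finset.mem_image, List.mem_toFinset, not_exists, not_and]
      intro g hg hgj
      rw [vert_eq g (hC6 g hg).1] at hgj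
      have : g = j' := by simpa using hgj
      exact (hC6 g hg).2 (this ▸ hU)
    · intro v hv
      simp only [Finset.mem_compl, not_not, Finset.mem_image, List.mem_toFinset] at hv
      obtain ⟨g, hg, rfl⟩ := hv
      exact hall g hg

theorem bool_prefix : ∀ b : Fin 6 → Bool, (∀ i j, i ≤ j → b j = true → b i = true) →
    ∀ i : Fin 6, b i = decide ((i : ℕ) < (Finset.univ.filter fun i => b i = true).card) := by
  decide +kernel

/-- The labelling required by the search: vertex `0` is positive if any vertex is, the positive
ones precede the negative ones, and within equal signs the values at vertex `0` decrease (apart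
from the label `0` itself). -/
theorem exists_sorted_labelling {V : Type*} [Fintype V] (hV : Fintype.card V = 6)
    {σ : Option V → Bool} {γ : V → Option V → ℝ} (hγ : ∀ v, Function.Injective (γ v)) :
    ∃ e : Fin 6 ≃ V,
      (∀ i : Fin 6, σ (some (e i)) =
        decide ((i : ℕ) < (Finset.univ.filter fun v => σ (some v) = true).card)) ∧
      ∀ x y : Fin 6, 0 < x → x < y → σ (some (e x)) = σ (some (e y)) →
        γ (e 0) (some (e y)) < γ (e 0) (some (e x)) := by
  classical
  -- the special vertex is positive as soon as there is a positive vertex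
  obtain ⟨v₀, hv₀⟩ : ∃ v₀ : V, ∀ v, σ (some v) = true → σ (some v₀) = true := by
    by_cases h : ∃ v, σ (some v) = true
    · exact ⟨h.choose, fun _ _ => h.choose_spec⟩
    · have : Nonempty V := Fintype.card_pos_iff.1 (by omega)
      exact ⟨Classical.arbitrary V, fun v hv => absurd ⟨v, hv⟩ h⟩
  let c : V → ℕ := fun v => if v = v₀ then 0 else if σ (some v) = true then 1 else 2
  let key : V → ℕ ×ₗ ℝ := fun v => toLex (c v, -γ v₀ (some v))
  let e₀ : Fin 6 ≃ V := (Fintype.equivFinOfCardEq hV).symm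
  let e : Fin 6 ≃ V := (Tuple.sort (key ∘ e₀)).trans e₀
  have hmono : Monotone fun i => key (e i) := Tuple.monotone_sort (key ∘ e₀)
  have hc : ∀ i j, i ≤ j → c (e i) ≤ c (e j) := by
    intro i j hij
    have := hmono hij
    simp only [key, Prod.Lex.toLex_le_toLex] at this
    rcases this with h | h
    · exact h.le
    · exact h.1.le
  have he0 : e 0 = v₀ := by
    obtain ⟨i, hi⟩ := e.surjective v₀
    have := hc 0 i (Fin.zero_le i)
    by_contra hne
    have h1 : c (e i) = 0 := by simp [c, hi]
    have h2 : c (e 0) ≠ 0 := by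
      simp only [c, if_neg hne]
      split_ifs <;> norm_num
    omega
  refine ⟨e, ?_, ?_⟩
  · intro i
    have hcard : (Finset.univ.filter fun v => σ (some v) = true).card =
        (Finset.univ.filter fun i => σ (some (e i)) = true).card := by
      symm
      refine Finset.card_bij (fun i _ => e i) ?_ ?_ ?_
      · simp
      · simp
      · intro v hv
        exact ⟨e.symm v, by simpa using hv, by simp⟩
    rw [hcard]
    refine bool_prefix (fun i => σ (some (e i))) ?_ i
    intro i j hij hj
    by_contra hi
    have h0 := hv₀ _ hj
    have hne : e i ≠ v₀ := fun h => hi (h ▸ h0)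
    have h1 : c (e i) = 2 := by simp only [c, if_neg hne, if_neg hi]
    have h2 : c (e j) ≤ 1 := by
      simp only [c, if_pos hj]
      split_ifs <;> norm_num
    have := hc i j hij
    omega
  · intro x y hx hxy hσ
    have hne : ∀ z : Fin 6, 0 < z → e z ≠ v₀ := by
      intro z hz h
      rw [← he0] at h
      exact hz.ne' (e.injective h)
    have hcc : c (e x) = c (e y) := by
      simp only [c, if_neg (hne x hx), if_neg (hne y (hx.trans hxy)), hσ]
    have := hmono hxy.le
    simp only [key, Prod.Lex.toLex_le_toLex, hcc, lt_irrefl, true_and, false_or] at this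
    rw [he0]
    refine lt_of_le_of_ne (by linarith) fun h => ?_
    have := hγ _ h
    simp only [Option.some.injEq, EmbeddingLike.apply_eq_iff_eq] at this
    exact hxy.ne' this

/-- The combinatorial core: every configuration of six vertices is `Good`. Up to a global sign
change there are at most three positive vertices, and the extra point is needed (and then
negative) only if there are exactly three. -/
theorem good_of_card {V : Type*} [Fintype V] (hV : Fintype.card V = 6)
    (σ : Option V → Bool) (γ : V → Option V → ℝ) (hγ : ∀ v, Function.Injective (γ v)) :
    Good σ γ := by
  classical
  -- at most three positive vertices, and exactly three only when the extra point is negative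
  have key : ∀ (σ : Option V → Bool) (γ : V → Option V → ℝ), (∀ v, Function.Injective (γ v)) →
      ((Finset.univ.filter fun v => σ (some v) = true).card < 3 ∨
        (Finset.univ.filter fun v => σ (some v) = true).card = 3 ∧ σ none = false) →
      Good σ γ := by
    intro σ γ hγ hcase
    by_contra hg
    obtain ⟨e, he, hs⟩ := exists_sorted_labelling hV hγ (σ := σ)
    generalize (Finset.univ.filter fun v => σ (some v) = true).card = a at he hcase
    have hs' : ∀ x y : Fin 6, 0 < x → x < y → ((x : ℕ) < a ↔ (y : ℕ) < a) →
        γ (e 0) (some (e y)) < γ (e 0) (some (e x)) := by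
      intro x y hx hxy hxa
      exact hs x y hx hxy (by rw [he, he]; simpa using hxa)
    have main := fun n hn h6 l hl =>
      refute_false_of_not_good e hγ hg (a := a) (n := n) hn he h6 hs' (l := l) hl
    rcases hcase with h | ⟨rfl, hz⟩
    · interval_cases a
      · exact absurd refute_zero (by rw [main 6 (by norm_num) (by norm_num) _ (by decide)]; simp)
      · exact absurd refute_one (by rw [main 6 (by norm_num) (by norm_num) _ (by decide)]; simp)
      · exact absurd refute_two (by rw [main 6 (by norm_num) (by norm_num) _ (by decide)]; simp)
    · exact absurd refute_three
        (by rw [main 7 le_rfl (fun _ => by simpa using hz) _ (by decide)]; simp)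
  by_cases h : (Finset.univ.filter fun v => σ (some v) = true).card < 3 ∨
      (Finset.univ.filter fun v => σ (some v) = true).card = 3 ∧ σ none = false
  · exact key σ γ hγ h
  · refine Good.of_flip (key _ _ (fun v i j hij => hγ v (neg_injective hij)) ?_)
    have hsum := Finset.card_filter_add_card_filter_not (s := (Finset.univ : Finset V))
      (fun v => σ (some v) = true)
    rw [Finset.card_univ, hV] at hsum
    simp only [Bool.not_eq_true] at hsum
    simp only [Bool.not_eq_true', Bool.not_eq_false']
    have : σ none = true ∨ σ none = false := by cases σ none <;> simp
    rcases this with h' | h' <;> simp [h'] at h ⊢ <;> omega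

/-! ### Affine functions and general position -/

/-- Points of five-dimensional space. -/
abbrev Pt : Type := Fin 5 → ℝ

theorem InGeneralPosition.mono {S T : Finset Pt} (h : InGeneralPosition 5 S) (hT : T ⊆ S) :
    InGeneralPosition 5 T :=
  fun U hU hc => h U (hU.trans hT) hc

theorem affineIndependent_of_card_le {S T : Finset Pt} (h : InGeneralPosition 5 S)
    (hS : 6 ≤ S.card) (hT : T ⊆ S) (hc : T.card ≤ 6) :
    AffineIndependent ℝ ((↑) : T → Pt) := by
  obtain ⟨U, hTU, hUS, hU⟩ := Finset.exists_subsuperset_card_eq hT hc hS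
  exact (h U hUS hU).mono (t := (U : Set Pt)) (s := (T : Set Pt)) (by exact_mod_cast hTU)

/-- Six points in general position span, and have barycentric coordinates. -/
theorem exists_coords {S B : Finset Pt} (h : InGeneralPosition 5 S) (hB : B ⊆ S)
    (hc : B.card = 6) :
    affineSpan ℝ (B : Set Pt) = ⊤ ∧
    ∃ β : Pt → (Pt →ᵃ[ℝ] ℝ), ∀ x ∈ B, ∀ y ∈ B, β x y = if x = y then 1 else 0 := by
  classical
  have hi := h B hB hc
  have ht : affineSpan ℝ (Set.range ((↑) : B → Pt)) = ⊤ := by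
    rw [hi.affineSpan_eq_top_iff_card_eq_finrank_add_one]
    simp [hc]
  let b : AffineBasis B ℝ Pt := ⟨(↑), hi, ht⟩
  refine ⟨by simpa using ht, fun x => if hx : x ∈ B then b.coord ⟨x, hx⟩ else 0, ?_⟩
  intro x hx y hy
  have : b.coord ⟨x, hx⟩ (b ⟨y, hy⟩) = if (⟨x, hx⟩ : B) = ⟨y, hy⟩ then 1 else 0 :=
    b.coord_apply _ _
  simp only [dif_pos hx]
  refine Eq.trans this ?_
  simp only [Subtype.mk.injEq]

/-- A nonzero affine function vanishes on at most five points of a set in general position. -/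
theorem card_zeros_le {S T : Finset Pt} (h : InGeneralPosition 5 S) (hT : T ⊆ S)
    {f : Pt →ᵃ[ℝ] ℝ} (h0 : ∀ q ∈ T, f q = 0) {x : Pt} (hx : f x ≠ 0) : T.card ≤ 5 := by
  by_contra hc
  obtain ⟨B, hBT, hB⟩ := Finset.exists_subset_card_eq (s := T) (n := 6) (by omega)
  obtain ⟨hs, -⟩ := exists_coords h (hBT.trans hT) hB
  have := AffineMap.eqOn_affineSpan (f := f) (g := 0) (s := (B : Set Pt))
    (fun q hq => h0 q (hBT hq))
  rw [hs] at this
  exact hx (this (AffineSubspace.mem_top ℝ Pt x))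

theorem exists_hyperplane {S T : Finset Pt} (h : InGeneralPosition 5 S) (hT : T ⊆ S)
    (hc : T.card = 5) (hS : 6 ≤ S.card) : ∃ f : Pt →ᵃ[ℝ] ℝ, ∀ q ∈ S, f q = 0 ↔ q ∈ T := by
  classical
  obtain ⟨x, hxS, hxT⟩ := Finset.exists_mem_notMem_of_card_lt_card (by omega : T.card < S.card)
  obtain ⟨-, β, hβ⟩ := exists_coords h (B := insert x T) (Finset.insert_subset hxS hT)
    (by rw [Finset.card_insert_of_notMem hxT, hc])
  have h0 : ∀ q ∈ T, β x q = 0 := fun q hq => by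
    rw [hβ x (by simp) q (by simp [hq]), if_neg]
    rintro rfl
    exact hxT hq
  have h1 : β x x ≠ 0 := by rw [hβ x (by simp) x (by simp)]; simp
  refine ⟨β x, fun q hq => ⟨fun hz => ?_, h0 q⟩⟩
  by_contra hqT
  have := card_zeros_le h (T := insert q T) (Finset.insert_subset hq hT) (f := β x)
    (by simpa using ⟨hz, h0⟩) h1
  rw [Finset.card_insert_of_notMem hqT] at this
  omega

/-- The affine dependence of seven points, in dual form: `α` is the vector of its coefficients,
and `F x - F y` is the affine function vanishing on the other five points, normalized so that
these functions are differences of a single family `F`. -/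
theorem exists_radon {S W : Finset Pt} (h : InGeneralPosition 5 S) (hW : W ⊆ S)
    (hc : W.card = 7) :
    ∃ (α : Pt → ℝ) (F : Pt → (Pt →ᵃ[ℝ] ℝ)), (∀ x ∈ W, α x ≠ 0) ∧
      ∀ x ∈ W, ∀ y ∈ W, x ≠ y → (F x - F y) x = 1 / α x ∧ (F x - F y) y = -(1 / α y) ∧
        ∀ w ∈ W, w ≠ x → w ≠ y → (F x - F y) w = 0 := by
  classical
  obtain ⟨i₀, hi₀⟩ : W.Nonempty := Finset.card_pos.1 (by omega)
  have hBc : (W.erase i₀).card = 6 := by rw [Finset.card_erase_of_mem hi₀, hc]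
  have hBW : W.erase i₀ ⊆ W := Finset.erase_subset _ _
  obtain ⟨-, β, hβ⟩ := exists_coords h (hBW.trans hW) hBc
  have hne : ∀ x ∈ W, x ≠ i₀ → β x i₀ ≠ 0 := by
    intro x hx hxi hz
    have hxB : x ∈ W.erase i₀ := Finset.mem_erase.2 ⟨hxi, hx⟩
    have := card_zeros_le h (T := W.erase x) ((Finset.erase_subset _ _).trans hW) (f := β x)
      (x := x) ?_ (by rw [hβ x hxB x hxB]; simp)
    · rw [Finset.card_erase_of_mem hx] at this
      omega
    · intro q hq
      obtain ⟨hqx, hq⟩ := Finset.mem_erase.1 hq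
      by_cases hqi : q = i₀
      · rw [hqi, hz]
      · rw [hβ x hxB q (Finset.mem_erase.2 ⟨hqi, hq⟩), if_neg (Ne.symm hqx)]
  refine ⟨fun x => if x = i₀ then -1 else β x i₀,
    fun x => if x = i₀ then 0 else (β x i₀)⁻¹ • β x, ?_, ?_⟩
  · intro x hx
    by_cases hxi : x = i₀
    · simp [hxi]
    · simpa [hxi] using hne x hx hxi
  · have val : ∀ x ∈ W, x ≠ i₀ → ∀ y ∈ W, y ≠ i₀ →
        ((β x i₀)⁻¹ • β x) y = if x = y then (β x i₀)⁻¹ else 0 := by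
      intro x hx hxi y hy hyi
      have := hβ x (Finset.mem_erase.2 ⟨hxi, hx⟩) y (Finset.mem_erase.2 ⟨hyi, hy⟩)
      simp [this]
    have val0 : ∀ x ∈ W, x ≠ i₀ → ((β x i₀)⁻¹ • β x) i₀ = 1 := by
      intro x hx hxi
      simp [hne x hx hxi]
    intro x hx y hy hxy
    have hsub : ∀ (f g : Pt →ᵃ[ℝ] ℝ) q, (f - g) q = f q - g q := fun f g q => rfl
    simp only [hsub]
    by_cases hxi : x = i₀ <;> by_cases hyi : y = i₀
    · exact absurd (hxi.trans hyi.symm) hxy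
    · subst hxi
      simp only [if_true, if_neg hyi]
      refine ⟨?_, ?_, ?_⟩
      · rw [val0 y hy hyi]; simp
      · rw [val y hy hyi y hy hyi]; simp
      · intro w hw hwx hwy
        rw [val y hy hyi w hw hwx, if_neg (Ne.symm hwy)]; simp
    · subst hyi
      simp only [if_true, if_neg hxi]
      refine ⟨?_, ?_, ?_⟩
      · rw [val x hx hxi x hx hxi]; simp
      · rw [val0 x hx hxi]; simp
      · intro w hw hwx hwy
        rw [val x hx hxi w hw hwy, if_neg (Ne.symm hwx)]; simp
    · simp only [if_neg hxi, if_neg hyi]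
      refine ⟨?_, ?_, ?_⟩
      · rw [val x hx hxi x hx hxi, val y hy hyi x hx hxi, if_neg hxy.symm]; simp
      · rw [val x hx hxi y hy hyi, val y hy hyi y hy hyi, if_neg hxy]; simp
      · intro w hw hwx hwy
        by_cases hwi : w = i₀
        · rw [hwi, val0 x hx hxi, val0 y hy hyi, sub_self]
        · rw [val x hx hxi w hw hwi, val y hy hyi w hw hwi, if_neg (Ne.symm hwx),
            if_neg (Ne.symm hwy), sub_self]

/-! ### Half-spaces -/

theorem affine_sum (f : Pt →ᵃ[ℝ] ℝ) {Y : Finset Pt} {w : Pt → ℝ} (hw : ∑ y ∈ Y, w y = 1) :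
    f (∑ y ∈ Y, w y • y) = ∑ y ∈ Y, w y * f y := by
  have hd : ∀ x, f x = f.linear x + f 0 := fun x => congrFun f.decomp x
  rw [hd, map_sum]
  simp only [map_smul, smul_eq_mul]
  have : ∑ y ∈ Y, w y * f y = ∑ y ∈ Y, (w y * f.linear y + w y * f 0) :=
    Finset.sum_congr rfl fun y _ => by rw [hd y, mul_add]
  rw [this, Finset.sum_add_distrib, ← Finset.sum_mul, hw, one_mul]

/-- A point of a set in general position lying on or beyond a hyperplane is not in the hull of
other points on the near side, even if some of these lie on the hyperplane. -/
theorem notMem_convexHull_of_half {S Y : Finset Pt} (h : InGeneralPosition 5 S)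
    {f : Pt →ᵃ[ℝ] ℝ} {x p : Pt} (hx : f x ≠ 0) (hS : 6 ≤ S.card) (hp : p ∈ S) (hY : Y ⊆ S.erase p)
    (hf : ∀ y ∈ Y, f y ≤ 0) (hfp : 0 ≤ f p) : p ∉ convexHull ℝ (Y : Set Pt) := by
  classical
  intro hmem
  obtain ⟨w, hw0, hw1, hwp⟩ := Finset.mem_convexHull'.1 hmem
  have hsum := affine_sum f hw1
  rw [hwp] at hsum
  have hterm : ∀ y ∈ Y, w y * f y ≤ 0 := fun y hy =>
    mul_nonpos_of_nonneg_of_nonpos (hw0 y hy) (hf y hy)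
  have hle : ∑ y ∈ Y, w y * f y ≤ 0 := Finset.sum_nonpos hterm
  have hfp0 : f p = 0 := le_antisymm (hsum ▸ hle) hfp
  have hzero : ∀ y ∈ Y, w y * f y = 0 :=
    (Finset.sum_eq_zero_iff_of_nonpos hterm).1 (hsum ▸ hfp0)
  set Z := Y.filter fun y => f y = 0 with hZ
  have hwZ : ∀ y ∈ Y, y ∉ Z → w y = 0 := by
    intro y hy hyZ
    have : f y ≠ 0 := fun h0 => hyZ (Finset.mem_filter.2 ⟨hy, h0⟩)
    exact (mul_eq_zero.1 (hzero y hy)).resolve_right this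
  have hZY : Z ⊆ Y := Finset.filter_subset _ _
  have hpZ : p ∈ convexHull ℝ (Z : Set Pt) := by
    refine Finset.mem_convexHull'.2 ⟨w, fun y hy => hw0 y (hZY hy), ?_, ?_⟩
    · rw [Finset.sum_subset hZY hwZ, hw1]
    · rw [Finset.sum_subset hZY fun y hy hn => by rw [hwZ y hy hn, zero_smul], hwp]
  have hpn : p ∉ Z := fun hp' => Finset.notMem_erase p S (hY (hZY hp'))
  have hsubS : insert p Z ⊆ S :=
    Finset.insert_subset hp ((hZY.trans hY).trans (Finset.erase_subset _ _))
  have hcard := card_zeros_le h (T := insert p Z) hsubS (f := f)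
    (fun q hq => (Finset.mem_insert.1 hq).elim (fun he => he ▸ hfp0)
      fun hq => (Finset.mem_filter.1 hq).2) hx
  have hind := affineIndependent_of_card_le h hS hsubS (by omega)
  have hnot := hind.notMem_affineSpan_sdiff ⟨p, by simp⟩ Set.univ
  apply hnot
  have himg : ((↑) : ↥(insert p Z) → Pt) '' (Set.univ \ {⟨p, by simp⟩}) = (Z : Set Pt) := by
    ext q
    simp only [Set.mem_image, Set.mem_sdiff, Set.mem_univ, true_and, Set.mem_singleton_iff,
      Subtype.exists, Finset.mem_insert, Subtype.mk.injEq, exists_and_right, exists_eq_right,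
      Finset.mem_coe]
    constructor
    · rintro ⟨hq, hne⟩
      exact hq.resolve_left hne
    · intro hq
      exact ⟨.inr hq, fun he => hpn (he ▸ hq)⟩
  rw [himg]
  exact convexHull_subset_affineSpan _ hpZ

/-! ### Inner points and deletions -/

open Classical in
/-- The points of `S` that are not extreme. -/
noncomputable def inner (S : Finset Pt) : Finset Pt :=
  S.filter fun p => p ∈ convexHull ℝ (↑(S.erase p) : Set Pt)

theorem mem_inner {S : Finset Pt} {p : Pt} :
    p ∈ inner S ↔ p ∈ S ∧ p ∈ convexHull ℝ (↑(S.erase p) : Set Pt) := by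
  classical
  simp [inner]

theorem inner_subset (S : Finset Pt) : inner S ⊆ S := fun _ hp => (mem_inner.1 hp).1

theorem inner_mono {S T : Finset Pt} (h : S ⊆ T) : inner S ⊆ inner T := fun _ hp =>
  mem_inner.2 ⟨h (mem_inner.1 hp).1,
    convexHull_mono (by exact_mod_cast Finset.erase_subset_erase _ h) (mem_inner.1 hp).2⟩

/-- Krein–Milman for finite sets. -/
theorem subset_convexHull_extreme (S : Finset Pt) :
    (S : Set Pt) ⊆ convexHull ℝ (↑(S \ inner S) : Set Pt) := by
  have hfin := S.finite_toSet
  have hKM := closure_convexHull_extremePoints (hfin.isCompact_convexHull ℝ)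
    (convex_convexHull ℝ (S : Set Pt))
  have hsub : (convexHull ℝ (S : Set Pt)).extremePoints ℝ ⊆ (↑(S \ inner S) : Set Pt) := by
    intro p hp
    have hpS : p ∈ S := extremePoints_convexHull_subset hp
    rw [Finset.mem_coe, Finset.mem_sdiff]
    refine ⟨hpS, fun hin => ?_⟩
    have hconv := ((convex_convexHull ℝ (S : Set Pt)).mem_extremePoints_iff_convex_sdiff.1 hp).2
    have hle : convexHull ℝ (↑(S.erase p) : Set Pt) ⊆ convexHull ℝ (S : Set Pt) \ {p} := by
      refine convexHull_min (fun q hq => ?_) hconv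
      rw [Finset.mem_coe, Finset.mem_erase] at hq
      exact ⟨subset_convexHull ℝ _ hq.2, hq.1⟩
    exact (hle (mem_inner.1 hin).2).2 rfl
  have hcl := (Finset.finite_toSet (S \ inner S)).isClosed_convexHull ℝ
  intro p hp
  have : p ∈ closure (convexHull ℝ ((convexHull ℝ (S : Set Pt)).extremePoints ℝ)) := by
    rw [hKM]
    exact subset_convexHull ℝ _ hp
  exact hcl.closure_subset_iff.2 (convexHull_mono hsub) this

theorem le_zero_of_mem_convexHull {f : Pt →ᵃ[ℝ] ℝ} {Y : Set Pt} (hY : ∀ y ∈ Y, f y ≤ 0) {p : Pt}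
    (hp : p ∈ convexHull ℝ Y) : f p ≤ 0 := by
  have hc : Convex ℝ (f ⁻¹' Set.Iic 0) := (convex_Iic (0 : ℝ)).affine_preimage f
  exact convexHull_min (fun y hy => hY y hy) hc hp

theorem zero_le_of_mem_convexHull {f : Pt →ᵃ[ℝ] ℝ} {Y : Set Pt} (hY : ∀ y ∈ Y, 0 ≤ f y) {p : Pt}
    (hp : p ∈ convexHull ℝ Y) : 0 ≤ f p := by
  have hc : Convex ℝ (f ⁻¹' Set.Ici 0) := (convex_Ici (0 : ℝ)).affine_preimage f
  exact convexHull_min (fun y hy => hY y hy) hc hp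

theorem six_le_card_extreme {S : Finset Pt} (h : InGeneralPosition 5 S) (hS : 6 ≤ S.card) :
    6 ≤ (S \ inner S).card := by
  by_contra hc
  obtain ⟨T, hET, hTS, hT⟩ := Finset.exists_subsuperset_card_eq
    (Finset.sdiff_subset : S \ inner S ⊆ S) (by omega : _ ≤ 5) (by omega : 5 ≤ S.card)
  obtain ⟨f, hf⟩ := exists_hyperplane h hTS hT hS
  obtain ⟨x, hxS, hxT⟩ := Finset.exists_mem_notMem_of_card_lt_card (by omega : T.card < S.card)
  have hx := subset_convexHull_extreme S hxS
  have h0 : ∀ y ∈ (↑(S \ inner S) : Set Pt), f y = 0 := fun y hy => by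
    exact (hf y (hTS (hET hy))).2 (hET hy)
  exact hxT ((hf x hxS).1 (le_antisymm
    (le_zero_of_mem_convexHull (fun y hy => (h0 y hy).le) hx)
    (zero_le_of_mem_convexHull (fun y hy => (h0 y hy).ge) hx)))

/-- It suffices to delete at most four points so that no point of `S`, deleted or not, is in the
hull of the other remaining points: any nine remaining points then form a hole. -/
theorem exists_hole_of_removal {S : Finset Pt} (hS : S.card = 13) (D : Finset Pt)
    (hD : D.card ≤ 4)
    (h : ∀ p ∈ S, p ∉ convexHull ℝ (↑((S \ D).erase p) : Set Pt)) :
    ∃ X : Finset Pt, IsHole 5 9 S X := by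
  have hc : 9 ≤ (S \ D).card := by
    have := Finset.le_card_sdiff D S
    omega
  obtain ⟨X, hX, hX9⟩ := Finset.exists_subset_card_eq hc
  have hXS : X ⊆ S := hX.trans Finset.sdiff_subset
  refine ⟨X, hXS, hX9, fun p hp hmem => ?_, fun p hp hpX hmem => ?_⟩
  · exact h p (hXS hp) (convexHull_mono (by exact_mod_cast Finset.erase_subset_erase p hX) hmem)
  · refine h p hp (convexHull_mono (fun q hq => ?_) hmem)
    rw [Finset.mem_coe, Finset.mem_erase]
    exact ⟨fun he => hpX (he ▸ hq), hX hq⟩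

theorem notMem_of_notMem_inner {S Y : Finset Pt} {p : Pt} (hp : p ∈ S) (hi : p ∉ inner S)
    (hY : Y ⊆ S) : p ∉ convexHull ℝ (↑(Y.erase p) : Set Pt) := fun hmem =>
  hi (mem_inner.2 ⟨hp, convexHull_mono (by exact_mod_cast Finset.erase_subset_erase p hY) hmem⟩)

/-- If at most one extreme point can be deleted so that at most five inner points remain, a
hyperplane through those leaves at most four of the other points on one of its sides (one less if
`D₀` is nonempty), and deleting that side leaves a hole. -/
theorem exists_hole_of_inner_le {S D₀ : Finset Pt} (hS : S.card = 13) (h : InGeneralPosition 5 S)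
    (hD₀ : D₀ ⊆ S \ inner S) (hc : D₀.card ≤ 1) (hi : (inner (S \ D₀)).card ≤ 5) :
    ∃ X : Finset Pt, IsHole 5 9 S X := by
  have hD₀S : D₀ ⊆ S := hD₀.trans Finset.sdiff_subset
  have hcard := Finset.card_sdiff_add_card_eq_card hD₀S
  obtain ⟨T, hiT, hTS, hT⟩ := Finset.exists_subsuperset_card_eq (inner_subset (S \ D₀)) hi
    (by omega)
  have hTS' : T ⊆ S := hTS.trans Finset.sdiff_subset
  obtain ⟨f, hf⟩ := exists_hyperplane h hTS' hT (by omega)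
  -- a function whose positive side inside `S \ D₀` is the smaller one
  obtain ⟨g, hg, hgc⟩ : ∃ g : Pt →ᵃ[ℝ] ℝ, (∀ q ∈ S, g q = 0 ↔ q ∈ T) ∧
      ((S \ D₀).filter fun q => 0 < g q).card + D₀.card ≤ 4 := by
    have hpos : ((S \ D₀).filter fun q => 0 < f q) ∪ ((S \ D₀).filter fun q => 0 < (-f) q) ⊆
        (S \ D₀) \ T := by
      intro q hq
      simp only [Finset.mem_union, Finset.mem_filter] at hq
      rcases hq with ⟨hq, hq'⟩ | ⟨hq, hq'⟩
      · exact Finset.mem_sdiff.2 ⟨hq, fun hqT =>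
          hq'.ne' ((hf q (Finset.sdiff_subset hq)).2 hqT)⟩
      · refine Finset.mem_sdiff.2 ⟨hq, fun hqT => hq'.ne' ?_⟩
        simp [(hf q (Finset.sdiff_subset hq)).2 hqT]
    have hdisj : Disjoint ((S \ D₀).filter fun q => 0 < f q)
        ((S \ D₀).filter fun q => 0 < (-f) q) := by
      rw [Finset.disjoint_left]
      intro q h1 h2
      have h1 := (Finset.mem_filter.1 h1).2
      have h2 := (Finset.mem_filter.1 h2).2
      have : (-f) q = - f q := rfl
      linarith
    have h1 := Finset.card_le_card hpos
    rw [Finset.card_union_of_disjoint hdisj] at h1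
    have h2 := Finset.card_sdiff_add_card_eq_card hTS
    by_cases hle : ((S \ D₀).filter fun q => 0 < f q).card + D₀.card ≤ 4
    · exact ⟨f, hf, hle⟩
    · refine ⟨-f, fun q hq => ?_, by omega⟩
      rw [← hf q hq]
      exact neg_eq_zero
  obtain ⟨x, hxS, hxT⟩ := Finset.exists_mem_notMem_of_card_lt_card (by omega : T.card < S.card)
  have hx : g x ≠ 0 := fun h0 => hxT ((hg x hxS).1 h0)
  refine exists_hole_of_removal hS (((S \ D₀).filter fun q => 0 < g q) ∪ D₀)
    ((Finset.card_union_le _ _).trans hgc) fun p hp => ?_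
  have hsub : S \ (((S \ D₀).filter fun q => 0 < g q) ∪ D₀) ⊆ S \ D₀ :=
    Finset.sdiff_subset_sdiff le_rfl Finset.subset_union_right
  by_cases hpD : p ∈ D₀
  · exact notMem_of_notMem_inner hp (Finset.mem_sdiff.1 (hD₀ hpD)).2 Finset.sdiff_subset
  have hp' : p ∈ S \ D₀ := Finset.mem_sdiff.2 ⟨hp, hpD⟩
  by_cases hpi : p ∈ inner (S \ D₀)
  · refine notMem_convexHull_of_half h hx (by omega) hp
      (Finset.erase_subset_erase p Finset.sdiff_subset) (fun y hy => ?_)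
      ((hg p hp).2 (hiT hpi)).ge
    have hy := Finset.mem_sdiff.1 (Finset.mem_of_mem_erase hy)
    by_contra hpos
    refine hy.2 (Finset.mem_union.2 ?_)
    by_cases hyD : y ∈ D₀
    · exact .inr hyD
    · exact .inl (Finset.mem_filter.2 ⟨Finset.mem_sdiff.2 ⟨hy.1, hyD⟩, not_le.1 hpos⟩)
  · exact notMem_of_notMem_inner hp' hpi hsub

/-! ### Six and seven inner points -/

/-- If six inner points survive every deletion of an extreme point, they cannot be all the inner
points: each would lie in the two simplices obtained from the seven extreme points by dropping
either of two points on the same side of the Radon partition, and these simplices only meet in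
their common facet. -/
theorem false_of_card_inner_eq_six {S : Finset Pt} (hS : S.card = 13) (h : InGeneralPosition 5 S)
    (hi : (inner S).card = 6) (hall : ∀ e ∈ S \ inner S, 6 ≤ (inner (S \ {e})).card) : False := by
  classical
  have hsplit := Finset.card_sdiff_add_card_eq_card (inner_subset S)
  have hES : S \ inner S ⊆ S := Finset.sdiff_subset
  have hE : (S \ inner S).card = 7 := by omega
  have hconv : ∀ e ∈ S \ inner S, ∀ q ∈ inner S,
      q ∈ convexHull ℝ (↑((S \ inner S).erase e) : Set Pt) := by
    intro e he q hq
    have heq : inner (S \ {e}) = inner S :=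
      Finset.eq_of_subset_of_card_le (inner_mono Finset.sdiff_subset) (by
        have := hall e he
        omega)
    have hq' := subset_convexHull_extreme (S \ {e}) (inner_subset _ (heq.symm ▸ hq))
    rw [heq] at hq'
    refine convexHull_mono (fun y hy => ?_) hq'
    simp only [Finset.coe_sdiff, Finset.coe_singleton, Set.mem_sdiff, Finset.mem_coe,
      Set.mem_singleton_iff] at hy
    simp only [Finset.coe_erase, Finset.coe_sdiff, Set.mem_sdiff, Finset.mem_coe,
      Set.mem_singleton_iff]
    tauto
  obtain ⟨q, hq⟩ : (inner S).Nonempty := Finset.card_pos.1 (by omega)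
  obtain ⟨α, F, hα, hF⟩ := exists_radon h hES hE
  obtain ⟨x, hx, y, hy, hxy, hs⟩ := Finset.exists_ne_map_eq_of_card_lt_of_maps_to
    (s := S \ inner S) (t := (Finset.univ : Finset Bool)) (by simp [hE])
    (f := fun e => decide (0 < α e))
    (fun _ _ => Finset.mem_coe.2 (Finset.mem_univ _))
  have hs : 0 < α x ↔ 0 < α y := by simpa using hs
  obtain ⟨f1, f2, f0⟩ := hF x hx y hy hxy
  have hx0 : (F x - F y) x ≠ 0 := by
    rw [f1]
    exact one_div_ne_zero (hα x hx)
  have hq0 : (F x - F y) q = 0 := by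
    have hqx := hconv x hx q hq
    have hqy := hconv y hy q hq
    have hval : ∀ w ∈ S \ inner S, w ≠ x → (F x - F y) w = 0 ∨ (F x - F y) w = -(1 / α y) := by
      intro w hw hwx
      by_cases hwy : w = y
      · exact .inr (hwy ▸ f2)
      · exact .inl (f0 w hw hwx hwy)
    have hval' : ∀ w ∈ S \ inner S, w ≠ y → (F x - F y) w = 0 ∨ (F x - F y) w = 1 / α x := by
      intro w hw hwy
      by_cases hwx : w = x
      · exact .inr (hwx ▸ f1)
      · exact .inl (f0 w hw hwx hwy)
    by_cases hpos : 0 < α x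
    · have hposy := hs.1 hpos
      have i1 : 0 < 1 / α x := by positivity
      have i2 : 0 < 1 / α y := by positivity
      refine le_antisymm (le_zero_of_mem_convexHull (fun w hw => ?_) hqx)
        (zero_le_of_mem_convexHull (fun w hw => ?_) hqy)
      · obtain ⟨a, b⟩ := Finset.mem_erase.1 (Finset.mem_coe.1 hw)
        rcases hval w b a with r | r <;> rw [r]
        linarith
      · obtain ⟨a, b⟩ := Finset.mem_erase.1 (Finset.mem_coe.1 hw)
        rcases hval' w b a with r | r <;> rw [r]
        linarith
    · have hnx : α x < 0 := lt_of_le_of_ne (not_lt.1 hpos) (hα x hx)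
      have hny : α y < 0 := lt_of_le_of_ne (not_lt.1 fun h => hpos (hs.2 h)) (hα y hy)
      have i1 : 1 / α x < 0 := one_div_neg.2 hnx
      have i2 : 1 / α y < 0 := one_div_neg.2 hny
      refine le_antisymm (le_zero_of_mem_convexHull (fun w hw => ?_) hqy)
        (zero_le_of_mem_convexHull (fun w hw => ?_) hqx)
      · obtain ⟨a, b⟩ := Finset.mem_erase.1 (Finset.mem_coe.1 hw)
        rcases hval' w b a with r | r <;> rw [r]
        linarith
      · obtain ⟨a, b⟩ := Finset.mem_erase.1 (Finset.mem_coe.1 hw)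
        rcases hval w b a with r | r <;> rw [r]
        linarith
  have hqE : q ∉ ((S \ inner S).erase x).erase y := fun h' =>
    (Finset.mem_sdiff.1 (Finset.mem_of_mem_erase (Finset.mem_of_mem_erase h'))).2 hq
  have hle := card_zeros_le h (T := insert q (((S \ inner S).erase x).erase y))
    (Finset.insert_subset (inner_subset S hq)
      (((Finset.erase_subset _ _).trans (Finset.erase_subset _ _)).trans hES))
    (f := F x - F y) (fun w hw => by
      rcases Finset.mem_insert.1 hw with rfl | hw
      · exact hq0
      · obtain ⟨wy, hw⟩ := Finset.mem_erase.1 hw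
        obtain ⟨wx, hw⟩ := Finset.mem_erase.1 hw
        exact f0 w hw wx wy) hx0
  rw [Finset.card_insert_of_notMem hqE,
    Finset.card_erase_of_mem (Finset.mem_erase.2 ⟨hxy.symm, hy⟩),
    Finset.card_erase_of_mem hx] at hle
  omega

/-- With seven inner points, deleting an extreme point `e` makes exactly one of them extreme. -/
theorem exists_exposed {S : Finset Pt} (hS : S.card = 13) (h : InGeneralPosition 5 S)
    (hi : (inner S).card = 7) (hall : ∀ e ∈ S \ inner S, 6 ≤ (inner (S \ {e})).card)
    {e : Pt} (he : e ∈ S \ inner S) :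
    ∃ i ∈ inner S, inner (S \ {e}) = (inner S).erase i := by
  classical
  have heS : e ∈ S := (Finset.mem_sdiff.1 he).1
  have hc : (S \ {e}).card = 12 := by
    rw [Finset.card_sdiff_of_subset (by simpa using heS), hS, Finset.card_singleton]
  have h6 := six_le_card_extreme (InGeneralPosition.mono h Finset.sdiff_subset)
    (S := S \ {e}) (by omega)
  have hsub : inner (S \ {e}) ⊆ inner S := inner_mono Finset.sdiff_subset
  have hsplit := Finset.card_sdiff_add_card_eq_card (inner_subset (S \ {e}))
  have h6' := hall e he
  obtain ⟨i, hiS, hin⟩ := Finset.exists_mem_notMem_of_card_lt_card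
    (by omega : (inner (S \ {e})).card < (inner S).card)
  refine ⟨i, hiS, Finset.eq_of_subset_of_card_le (fun q hq => ?_) ?_⟩
  · exact Finset.mem_erase.2 ⟨fun hqi => hin (hqi ▸ hq), hsub hq⟩
  · rw [Finset.card_erase_of_mem hiS]
    omega

/-- If `i` is the only inner point that becomes extreme after the deletion of `e`, all points other
than `e` lie in the hull of `i` and the remaining extreme points. -/
theorem mem_convexHull_exposed {S : Finset Pt} {e i : Pt}
    (hei : inner (S \ {e}) = (inner S).erase i) {q : Pt} (hq : q ∈ S) (hqe : q ≠ e) :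
    q ∈ convexHull ℝ {y : Pt | y = i ∨ (y ∈ S \ inner S ∧ y ≠ e)} := by
  classical
  have hmem := subset_convexHull_extreme (S \ {e}) (a := q) (by simp [hq, hqe])
  rw [hei] at hmem
  refine convexHull_mono (fun y hy => ?_) hmem
  simp only [Finset.coe_sdiff, Finset.coe_singleton, Set.mem_sdiff, Finset.mem_coe,
    Set.mem_singleton_iff, Finset.mem_erase] at hy
  simp only [Set.mem_ofPred_eq, Finset.mem_sdiff]
  tauto

/-- Different extreme points expose different inner points. -/
theorem exposed_injective {S : Finset Pt} (hS : S.card = 13) (h : InGeneralPosition 5 S)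
    (hi : (inner S).card = 7) {e e' i : Pt} (he : e ∈ S \ inner S) (he' : e' ∈ S \ inner S)
    (hiS : i ∈ inner S) (hei : inner (S \ {e}) = (inner S).erase i)
    (hei' : inner (S \ {e'}) = (inner S).erase i) : e = e' := by
  classical
  by_contra hne
  have hsplit := Finset.card_sdiff_add_card_eq_card (inner_subset S)
  have hES : S \ inner S ⊆ S := Finset.sdiff_subset
  have hE : (S \ inner S).card = 6 := by omega
  have hiE : i ∉ ((S \ inner S).erase e).erase e' := fun h' =>
    (Finset.mem_sdiff.1 (Finset.mem_of_mem_erase (Finset.mem_of_mem_erase h'))).2 hiS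
  set T := insert i (((S \ inner S).erase e).erase e') with hT
  have hTS : T ⊆ S := Finset.insert_subset (inner_subset S hiS)
      (((Finset.erase_subset _ _).trans (Finset.erase_subset _ _)).trans hES)
  have hTc : T.card = 5 := by
    rw [hT, Finset.card_insert_of_notMem hiE,
      Finset.card_erase_of_mem (Finset.mem_erase.2 ⟨Ne.symm hne, he'⟩),
      Finset.card_erase_of_mem he]
    omega
  obtain ⟨g, hg⟩ := exists_hyperplane h hTS hTc (by omega)
  have hg0 : ∀ w ∈ S \ inner S, w ≠ e → w ≠ e' → g w = 0 := fun w hw h1 h2 =>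
    (hg w (hES hw)).2 (by simp only [hT, Finset.mem_insert, Finset.mem_erase]; tauto)
  have hgi : g i = 0 := (hg i (inner_subset S hiS)).2 (by simp [hT])
  have hie : ∀ w ∈ S \ inner S, w ≠ i := fun w hw hwi => (Finset.mem_sdiff.1 hw).2 (hwi ▸ hiS)
  have hge : g e ≠ 0 := fun h0 => by
    have := (hg e (hES he)).1 h0
    simp only [hT, Finset.mem_insert, Finset.mem_erase] at this
    have := hie e he
    tauto
  have hge' : g e' ≠ 0 := fun h0 => by
    have := (hg e' (hES he')).1 h0
    simp only [hT, Finset.mem_insert, Finset.mem_erase] at this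
    have := hie e' he'
    tauto
  obtain ⟨j, hj, hji⟩ := Finset.exists_mem_notMem_of_card_lt_card
    (by simp [hi] : ({i} : Finset Pt).card < (inner S).card)
  have hjS := inner_subset S hj
  have hjne : ∀ w ∈ S \ inner S, j ≠ w := fun w hw hwj => (Finset.mem_sdiff.1 hw).2 (hwj ▸ hj)
  have hj0 : g j ≠ 0 := fun h0 => by
    have := (hg j hjS).1 h0
    simp only [hT, Finset.mem_insert, Finset.mem_erase, Finset.mem_sdiff] at this
    simp only [Finset.mem_singleton] at hji
    tauto
  have hiconv := subset_convexHull_extreme S (inner_subset S hiS)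
  -- since `i` lies on the hyperplane, the two extreme points cannot be on the same side
  have hside : ∀ f : Pt →ᵃ[ℝ] ℝ, f e ≠ 0 → f i = 0 →
      (∀ w ∈ S \ inner S, w ≠ e → w ≠ e' → f w = 0) → f e < 0 → f e' < 0 → False := by
    intro f fe fi f0 n1 n2
    refine notMem_convexHull_of_half h fe (by omega) (inner_subset S hiS)
      (Y := S \ inner S) (fun w hw => Finset.mem_erase.2 ⟨hie w hw, hES hw⟩) (fun w hw => ?_)
      fi.ge hiconv
    by_cases h1 : w = e
    · exact h1 ▸ n1.le
    by_cases h2 : w = e'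
    · exact h2 ▸ n2.le
    exact (f0 w hw h1 h2).le
  -- otherwise a further inner point would lie on the hyperplane
  have hopp : ∀ f : Pt →ᵃ[ℝ] ℝ, f j ≠ 0 → f i = 0 →
      (∀ w ∈ S \ inner S, w ≠ e → w ≠ e' → f w = 0) → f e < 0 → 0 < f e' → False := by
    intro f fj fi f0 n1 n2
    refine fj (le_antisymm
      (le_zero_of_mem_convexHull ?_ (mem_convexHull_exposed hei' hjS (hjne e' he')))
      (zero_le_of_mem_convexHull ?_ (mem_convexHull_exposed hei hjS (hjne e he))))
    · rintro w (rfl | ⟨hw, hwe⟩)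
      · exact fi.le
      · by_cases h1 : w = e
        · exact h1 ▸ n1.le
        · exact (f0 w hw h1 hwe).le
    · rintro w (rfl | ⟨hw, hwe⟩)
      · exact fi.ge
      · by_cases h1 : w = e'
        · exact h1 ▸ n2.le
        · exact (f0 w hw hwe h1).ge
  have hneg : ∀ q, (-g) q = - g q := fun q => rfl
  rcases lt_or_gt_of_ne hge with a | a <;> rcases lt_or_gt_of_ne hge' with b | b
  · exact hside g hge hgi hg0 a b
  · exact hopp g hj0 hgi hg0 a b
  · refine hopp (-g) ?_ ?_ ?_ ?_ ?_ <;> simp only [hneg]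
    · simpa using hj0
    · simpa using hgi
    · simpa using hg0
    · linarith
    · linarith
  · refine hside (-g) ?_ ?_ ?_ ?_ ?_ <;> simp only [hneg]
    · simpa using hge
    · simpa using hgi
    · simpa using hg0
    · linarith
    · linarith

/-- The case of seven inner points, by the combinatorial lemma `good_of_card`. -/
theorem exists_hole_of_card_inner_eq_seven {S : Finset Pt} (hS : S.card = 13)
    (h : InGeneralPosition 5 S) (hi : (inner S).card = 7)
    (hall : ∀ e ∈ S \ inner S, 6 ≤ (inner (S \ {e})).card) :
    ∃ X : Finset Pt, IsHole 5 9 S X := by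
  classical
  have hsplit := Finset.card_sdiff_add_card_eq_card (inner_subset S)
  have hES : S \ inner S ⊆ S := Finset.sdiff_subset
  have hIS : inner S ⊆ S := inner_subset S
  have hE : (S \ inner S).card = 6 := by omega
  have hex := fun v : ↥(S \ inner S) => exists_exposed hS h hi hall v.2
  choose ι hιI hι using hex
  have hιinj : Function.Injective ι := fun v v' hvv => Subtype.ext
    (exposed_injective hS h hi v.2 v'.2 (hιI v) (hι v) (by rw [hvv]; exact hι v'))
  have hcV : Fintype.card ↥(S \ inner S) = 6 := by rw [Fintype.card_coe, hE]
  obtain ⟨z, hz, hzι⟩ := Finset.exists_mem_notMem_of_card_lt_card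
    (s := Finset.univ.image ι) (t := inner S) (by
      rw [Finset.card_image_of_injective _ hιinj, Finset.card_univ, hcV, hi]
      norm_num)
  -- label the inner points: `some e` is the point exposed by `e`, `none` the remaining one
  let lab : Option ↥(S \ inner S) → Pt := fun o => o.elim z ι
  have hlabI : ∀ o, lab o ∈ inner S := by
    rintro (_ | v)
    · exact hz
    · exact hιI v
  have hlabinj : Function.Injective lab := by
    rintro (_ | v) (_ | v') hvv
    · rfl
    · exact absurd (Finset.mem_image.2 ⟨v', Finset.mem_univ _, hvv.symm⟩) hzι
    · exact absurd (Finset.mem_image.2 ⟨v, Finset.mem_univ _, hvv⟩) hzι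
    · exact congrArg some (hιinj hvv)
  have hlabsurj : ∀ p ∈ inner S, ∃ o, lab o = p := by
    have himg : Finset.univ.image lab = inner S := by
      refine Finset.eq_of_subset_of_card_le (fun p hp => ?_) ?_
      · obtain ⟨o, -, rfl⟩ := Finset.mem_image.1 hp
        exact hlabI o
      · rw [Finset.card_image_of_injective _ hlabinj, Finset.card_univ, Fintype.card_option, hcV,
          hi]
    intro p hp
    obtain ⟨o, -, ho⟩ := Finset.mem_image.1 (himg.symm ▸ hp)
    exact ⟨o, ho⟩
  obtain ⟨α, F, hα, hF⟩ := exists_radon h hIS hi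
  have hFne : ∀ o o', o ≠ o' → (F (lab o) - F (lab o')) (lab o) ≠ 0 := by
    intro o o' hoo
    rw [(hF _ (hlabI o) _ (hlabI o') (hlabinj.ne hoo)).1]
    exact one_div_ne_zero (hα _ (hlabI o))
  have hγ : ∀ v : ↥(S \ inner S), Function.Injective fun o => F (lab o) v := by
    intro v o o' hoo
    by_contra hne
    have hlne := hlabinj.ne hne
    have hvI : (v : Pt) ∉ ((inner S).erase (lab o)).erase (lab o') := fun h' =>
      (Finset.mem_sdiff.1 v.2).2 (Finset.mem_of_mem_erase (Finset.mem_of_mem_erase h'))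
    have hle := card_zeros_le h (T := insert (v : Pt) (((inner S).erase (lab o)).erase (lab o')))
      (Finset.insert_subset (hES v.2)
        (((Finset.erase_subset _ _).trans (Finset.erase_subset _ _)).trans hIS))
      (f := F (lab o) - F (lab o')) (fun w hw => by
        rcases Finset.mem_insert.1 hw with rfl | hw
        · exact sub_eq_zero.2 hoo
        · obtain ⟨w2, hw⟩ := Finset.mem_erase.1 hw
          obtain ⟨w1, hw⟩ := Finset.mem_erase.1 hw
          exact (hF _ (hlabI o) _ (hlabI o') hlne).2.2 w hw w1 w2) (hFne o o' hne)
    rw [Finset.card_insert_of_notMem hvI,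
      Finset.card_erase_of_mem (Finset.mem_erase.2 ⟨hlne.symm, hlabI o'⟩),
      Finset.card_erase_of_mem (hlabI o)] at hle
    omega
  let σ : Option ↥(S \ inner S) → Bool := fun o => decide (0 < α (lab o))
  obtain ⟨h₁, h₂, DI, DE, hne₁, hne₂, hcard, hrem, hkeep, hout⟩ :=
    good_of_card hcV σ (fun v o => F (lab o) v) hγ
  -- the sign of `F (lab h.1) - F (lab h.2)` on the inner points
  have hsign : ∀ k : Option ↥(S \ inner S) × Option ↥(S \ inner S), k.1 ≠ k.2 → ∀ o,
      (¬ Removes σ k o → (F (lab k.1) - F (lab k.2)) (lab o) ≤ 0) ∧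
      (¬ Keeps σ k o → 0 ≤ (F (lab k.1) - F (lab k.2)) (lab o)) := by
    intro k hk o
    obtain ⟨f1, f2, f0⟩ := hF _ (hlabI k.1) _ (hlabI k.2) (hlabinj.ne hk)
    by_cases o1 : o = k.1
    · subst o1
      rw [f1]
      by_cases hp : 0 < α (lab k.1)
      · exact ⟨fun hr => absurd (.inl ⟨rfl, by simpa [σ] using hp⟩) hr,
          fun _ => (one_div_pos.2 hp).le⟩
      · exact ⟨fun _ => one_div_nonpos.2 (not_lt.1 hp),
          fun hr => absurd (.inl ⟨rfl, by simpa [σ] using hp⟩) hr⟩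
    by_cases o2 : o = k.2
    · subst o2
      rw [f2]
      by_cases hp : 0 < α (lab k.2)
      · exact ⟨fun _ => neg_nonpos.2 (one_div_pos.2 hp).le,
          fun hr => absurd (.inr ⟨rfl, by simpa [σ] using hp⟩) hr⟩
      · exact ⟨fun hr => absurd (.inr ⟨rfl, by simpa [σ] using hp⟩) hr,
          fun _ => neg_nonneg.2 (one_div_nonpos.2 (not_lt.1 hp))⟩
    · have := f0 _ (hlabI o) (hlabinj.ne o1) (hlabinj.ne o2)
      exact ⟨fun _ => this.le, fun _ => this.ge⟩
  set D : Finset Pt := DI.image lab ∪ DE.image (↑) with hD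
  have hneg : ∀ k : Option ↥(S \ inner S) × Option ↥(S \ inner S), k.1 ≠ k.2 →
      (∀ o, Removes σ k o → o ∈ DI) → (∀ v ∉ DE, F (lab k.1) v < F (lab k.2) v) →
      ∀ y ∈ S \ D, (F (lab k.1) - F (lab k.2)) y ≤ 0 := by
    intro k hk hr ho y hy
    obtain ⟨hyS, hyD⟩ := Finset.mem_sdiff.1 hy
    by_cases hyI : y ∈ inner S
    · obtain ⟨o, rfl⟩ := hlabsurj y hyI
      refine (hsign k hk o).1 fun hr' => hyD (Finset.mem_union_left _ ?_)
      exact Finset.mem_image_of_mem _ (hr o hr')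
    · have hyE : y ∈ S \ inner S := Finset.mem_sdiff.2 ⟨hyS, hyI⟩
      have hv : (⟨y, hyE⟩ : ↥(S \ inner S)) ∉ DE := fun hv =>
        hyD (Finset.mem_union_right _ (Finset.mem_image.2 ⟨_, hv, rfl⟩))
      exact (sub_neg.2 (ho _ hv)).le
  refine exists_hole_of_removal hS D ((Finset.card_union_le _ _).trans
    ((Nat.add_le_add Finset.card_image_le Finset.card_image_le).trans hcard)) fun p hp => ?_
  by_cases hpI : p ∈ inner S
  swap
  · exact notMem_of_notMem_inner hp hpI Finset.sdiff_subset
  obtain ⟨o, rfl⟩ := hlabsurj p hpI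
  have half : ∀ k : Option ↥(S \ inner S) × Option ↥(S \ inner S), k.1 ≠ k.2 →
      (∀ y ∈ S \ D, (F (lab k.1) - F (lab k.2)) y ≤ 0) → ¬ Keeps σ k o →
      lab o ∉ convexHull ℝ (↑((S \ D).erase (lab o)) : Set Pt) := fun k hk hn hnk =>
    notMem_convexHull_of_half h (hFne _ _ hk) (by omega) hp
      (Finset.erase_subset_erase _ Finset.sdiff_subset)
      (fun y hy => hn y (Finset.mem_of_mem_erase hy)) ((hsign k hk o).2 hnk)
  by_cases k1 : Keeps σ h₁ o
  swap
  · exact half h₁ hne₁ (hneg h₁ hne₁ (fun o ho => hrem o (.inl ho)) fun v hv => (hout v hv).1) k1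
  by_cases k2 : Keeps σ h₂ o
  swap
  · exact half h₂ hne₂ (hneg h₂ hne₂ (fun o ho => hrem o (.inr ho)) fun v hv => (hout v hv).2) k2
  -- kept on both sides: the deletion of `v` has made the point extreme
  obtain ⟨v, hv, rfl⟩ := hkeep o k1 k2
  have hvD : (v : Pt) ∈ D := Finset.mem_union_right _ (Finset.mem_image.2 ⟨v, hv, rfl⟩)
  have hιne : ι v ≠ v := fun he => (Finset.mem_sdiff.1 v.2).2 (he ▸ hιI v)
  refine notMem_of_notMem_inner (S := S \ {(v : Pt)}) (p := ι v) ?_ ?_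
    (Finset.sdiff_subset_sdiff le_rfl (by simpa using hvD))
  · exact Finset.mem_sdiff.2 ⟨hp, by simpa using hιne⟩
  · rw [hι v]
    exact Finset.notMem_erase _ _

end Holes

/-- Every set of 13 points in ℝ⁵ in general position contains a 9-hole:
`h⁽⁵⁾(9) ≤ 13`. -/
theorem h5_9_le_13 (S : Finset (Fin 5 → ℝ)) (hcard : S.card = 13)
    (hgp : InGeneralPosition 5 S) :
    ∃ X : Finset (Fin 5 → ℝ), IsHole 5 9 S X := by
  by_contra hno
  have hsplit := Finset.card_sdiff_add_card_eq_card (Holes.inner_subset S)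
  have h6 := Holes.six_le_card_extreme hgp (by omega)
  have hall : ∀ D ⊆ S \ Holes.inner S, D.card ≤ 1 → 6 ≤ (Holes.inner (S \ D)).card := by
    intro D hD hc
    by_contra hlt
    exact hno (Holes.exists_hole_of_inner_le hcard hgp hD hc (by omega))
  have h0 := hall ∅ (by simp) (by simp)
  rw [Finset.sdiff_empty] at h0
  have h1 : ∀ e ∈ S \ Holes.inner S, 6 ≤ (Holes.inner (S \ {e})).card := fun e he =>
    hall {e} (by simpa using he) (by simp)
  obtain hi | hi : (Holes.inner S).card = 6 ∨ (Holes.inner S).card = 7 := by omega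
  · exact Holes.false_of_card_inner_eq_six hcard hgp hi h1
  · exact hno (Holes.exists_hole_of_card_inner_eq_seven hcard hgp hi h1)
end
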